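/- arXiv:2005.07067 — 4 statements merged into one kernel-verified Lean document; each statement's English description precedes it below -/
import Mathlib

section
/- The limit lim_{n→∞} ‖K^n 𝟙‖_p^{1/n} exists and equals the spectral radius ρ(K), where 𝟙 denotes the constant function equal to 1 on X. Consequently the quantity Λ_p = β ρ(K)^{1/θ} is well defined. -/
open MeasureTheory Filter Topology ENNReal

/-- The spectral radius of a bounded linear operator, via the Gelfand formula
`ρ(K) = lim_n ‖K^n‖^(1/n) = inf_{n ≥ 1} ‖K^n‖^(1/n)`. -/
noncomputable def specRad {E : Type*} [NormedAddCommGroup E] [NormedSpace ℝ E]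
    (K : E →L[ℝ] E) : ℝ := ⨅ n : ℕ, ‖K ^ (n + 1)‖ ^ (1 / (n + 1) : ℝ)

/-- Gelfand formula (Fekete) with a positive geometric lower bound. -/
lemma specRad_tendsto {E : Type*} [NormedAddCommGroup E] [NormedSpace ℝ E]
    (K : E →L[ℝ] E) (c : ℝ) (hc : 0 < c) (h : ∀ n : ℕ, c ^ n ≤ ‖K ^ n‖) :
    Tendsto (fun n : ℕ => ‖K ^ n‖ ^ (1 / n : ℝ)) atTop (𝓝 (specRad K)) := by
  have hpos : ∀ n, 0 < ‖K ^ n‖ := fun n => lt_of_lt_of_le (pow_pos hc n) (h n)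
  have hsub : Subadditive (fun n : ℕ => Real.log ‖K ^ n‖) := by
    intro m n
    show Real.log ‖K ^ (m + n)‖ ≤ Real.log ‖K ^ m‖ + Real.log ‖K ^ n‖
    rw [← Real.log_mul (hpos m).ne' (hpos n).ne', pow_add]
    apply Real.log_le_log
    · rw [← pow_add]; exact hpos _
    · exact norm_mul_le _ _
  have hbdd : BddBelow (Set.range fun n : ℕ => Real.log ‖K ^ n‖ / n) := by
    refine ⟨min 0 (Real.log c), ?_⟩
    rintro _ ⟨n, rfl⟩
    rcases Nat.eq_zero_or_pos n with rfl | hn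
    · simp
    · refine (min_le_right _ _).trans ?_
      have hn' : (0:ℝ) < n := by exact_mod_cast hn
      show Real.log c ≤ Real.log ‖K ^ n‖ / n
      rw [le_div_iff₀ hn', mul_comm, ← Real.log_pow]
      exact Real.log_le_log (pow_pos hc n) (h n)
  have hexp : ∀ n : ℕ, ‖K ^ n‖ ^ (1 / n : ℝ) = Real.exp (Real.log ‖K ^ n‖ / n) := by
    intro n
    rw [Real.rpow_def_of_pos (hpos n)]; congr 1; ring
  have hlim := (Real.continuous_exp.tendsto _).comp (hsub.tendsto_lim hbdd)
  have hlim' : Tendsto (fun n : ℕ => ‖K ^ n‖ ^ (1 / n : ℝ)) atTop (𝓝 (Real.exp hsub.lim)) := by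
    refine hlim.congr fun n => (hexp n).symm
  have heq : specRad K = Real.exp hsub.lim := by
    apply le_antisymm
    · have h1 := hlim'.comp (tendsto_add_atTop_nat 1)
      refine ge_of_tendsto' h1 fun n => ?_
      have hb : BddBelow (Set.range fun n : ℕ => ‖K ^ (n + 1)‖ ^ (1 / (n + 1) : ℝ)) :=
        ⟨0, by rintro _ ⟨n, rfl⟩; positivity⟩
      have := ciInf_le hb n
      simpa [specRad] using this
    · refine le_ciInf fun n => ?_
      have h2 := hexp (n + 1)
      push_cast at h2
      rw [h2]
      apply Real.exp_le_exp.mpr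
      have := hsub.lim_le_div hbdd (Nat.succ_ne_zero n)
      simpa using this
  rw [heq]; exact hlim'

/-- Abstract version on a normed lattice. -/
lemma abstract_lim {E : Type*} [NormedAddCommGroup E] [NormedSpace ℝ E] [Lattice E]
    [HasSolidNorm E] [IsOrderedAddMonoid E]
    (K : E →L[ℝ] E) (hKpos : ∀ f, 0 ≤ f → 0 ≤ K f) (e : E) (he1 : ‖e‖ = 1)
    (c C : ℝ) (hc : 0 < c) (hC : 0 < C) (hce : 0 ≤ c • e) (hcK : c • e ≤ K e)
    (hCK : ∀ f, |K f| ≤ (C * ‖f‖) • e) :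
    Tendsto (fun n : ℕ => ‖(K ^ n) e‖ ^ (1 / n : ℝ)) atTop (𝓝 (specRad K)) := by
  have hposn : ∀ n : ℕ, ∀ f, 0 ≤ f → 0 ≤ (K ^ n) f := by
    intro n
    induction n with
    | zero => intro f hf; simpa using hf
    | succ n ih => intro f hf; rw [pow_succ]; exact ih _ (hKpos f hf)
  have hmono : ∀ n : ℕ, ∀ f g, f ≤ g → (K ^ n) f ≤ (K ^ n) g := by
    intro n f g hfg
    have := hposn n (g - f) (sub_nonneg.mpr hfg)
    rw [map_sub] at this
    exact sub_nonneg.mp this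
  have hlow : ∀ n : ℕ, c ^ n ≤ ‖(K ^ n) e‖ := by
    intro n
    induction n with
    | zero => simp [he1]
    | succ n ih =>
      have h1 := hmono n _ _ hcK
      have h0 := hposn n _ hce
      have h2 : ‖(K ^ n) (c • e)‖ ≤ ‖(K ^ n) (K e)‖ := by
        apply norm_le_norm_of_abs_le_abs
        rwa [abs_of_nonneg h0, abs_of_nonneg (h0.trans h1)]
      rw [map_smul, norm_smul, Real.norm_of_nonneg hc.le] at h2
      rw [pow_succ, pow_succ K, mul_comm]
      exact (mul_le_mul_of_nonneg_left ih hc.le).trans h2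
  have hup : ∀ n : ℕ, ‖(K ^ n) e‖ ≤ ‖K ^ n‖ := by
    intro n
    simpa [he1] using (K ^ n).le_opNorm e
  have hG := specRad_tendsto K c hc fun n => (hlow n).trans (hup n)
  have hdom : ∀ n : ℕ, ‖K ^ (n + 1)‖ ≤ C * ‖(K ^ n) e‖ := by
    intro n
    refine ContinuousLinearMap.opNorm_le_bound _ (by positivity) fun f => ?_
    have h1 := hmono n _ _ ((le_abs_self _).trans (hCK f))
    have h2 := hmono n _ _ ((neg_le_abs _).trans (hCK f))
    rw [map_neg] at h2
    have h3 : ‖(K ^ n) (K f)‖ ≤ ‖(K ^ n) ((C * ‖f‖) • e)‖ := by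
      apply norm_le_norm_of_abs_le_abs
      exact (sup_le h1 h2).trans (le_abs_self _)
    rw [map_smul, norm_smul, Real.norm_of_nonneg (by positivity)] at h3
    rw [pow_succ]
    calc _ ≤ _ := h3
      _ = _ := by ring
  have hinv : Tendsto (fun n : ℕ => (1 / n : ℝ)) atTop (𝓝 0) :=
    tendsto_one_div_atTop_nhds_zero_nat
  have hlowlim : Tendsto (fun n : ℕ => (‖K ^ (n + 1)‖ ^ (1 / ((n + 1 : ℕ) : ℝ))) ^ (1 + 1 / n : ℝ)
      * (C⁻¹) ^ (1 / n : ℝ)) atTop (𝓝 (specRad K)) := by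
    have h1 := hG.comp (tendsto_add_atTop_nat 1)
    have h2 : Tendsto (fun n : ℕ => (1 + 1 / n : ℝ)) atTop (𝓝 1) := by
      simpa using hinv.const_add 1
    have h3 := h1.rpow h2 (Or.inr one_pos)
    have h4 := (tendsto_const_nhds (x := C⁻¹)).rpow hinv (Or.inl (inv_pos.mpr hC).ne')
    simpa using h3.mul h4
  refine tendsto_of_tendsto_of_tendsto_of_le_of_le' hlowlim hG ?_ ?_
  · filter_upwards [eventually_gt_atTop 0] with n hn
    have hn' : (0:ℝ) < n := by exact_mod_cast hn
    rw [← Real.rpow_mul (norm_nonneg _)]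
    have : 1 / ((n + 1 : ℕ) : ℝ) * (1 + 1 / n) = 1 / n := by
      push_cast; field_simp
    rw [this, ← Real.mul_rpow (norm_nonneg _) (inv_pos.mpr hC).le]
    apply Real.rpow_le_rpow (by positivity) _ (by positivity)
    rw [← div_eq_mul_inv, div_le_iff₀ hC, mul_comm]
    exact hdom n
  · exact Eventually.of_forall fun n =>
      Real.rpow_le_rpow (norm_nonneg _) (hup n) (by positivity)

/-- **Well-definedness of `Λ_p`.**  In the compact-state-space setting, with `𝟙`
the constant function equal to `1` on `X` (an element of `L_p(X,π)` since `π`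
is finite), the limit `lim_n ‖K^n 𝟙‖_p^(1/n)` exists and equals the spectral
radius `ρ(K)`; consequently `Λ_p = β ρ(K)^(1/θ)` is well defined. -/
theorem lim_norm_iterates_one_eq_specRad
    {X : Type*} [MetricSpace X] [CompactSpace X] [MeasurableSpace X] [BorelSpace X]
    (μ π : Measure X) [IsFiniteMeasure μ] [μ.IsOpenPosMeasure] [IsProbabilityMeasure π]
    (d : X → ℝ) (hd_cont : Continuous d) (hd_pos : ∀ x, 0 < d x)
    (hπ : π = μ.withDensity (fun x => ENNReal.ofReal (d x)))
    (p : ℝ≥0∞) [Fact (1 ≤ p)] (hp_top : p ≠ ⊤)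
    (k : X → X → ℝ) (hk_cont : Continuous (Function.uncurry k))
    (hk_pos : ∀ x y, 0 < k x y)
    (K : Lp ℝ p π →L[ℝ] Lp ℝ p π)
    (hK : ∀ g : Lp ℝ p π, (K g : X → ℝ) =ᵐ[π] fun x => ∫ y, k x y * g y ∂μ)
    (β θ : ℝ) (hβ0 : 0 < β) (hβ1 : β < 1) (hθ : θ ≠ 0)
    (one : Lp ℝ p π) (hone : (one : X → ℝ) =ᵐ[π] fun _ => (1 : ℝ)) :
    Tendsto (fun n : ℕ => ‖(K ^ n) one‖ ^ (1 / n : ℝ)) atTop (𝓝 (specRad K)) := by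
  obtain ⟨x₀⟩ : Nonempty X := by
    by_contra hne
    rw [not_nonempty_iff] at hne
    have h1 := measure_univ (μ := π)
    rw [Set.univ_eq_empty_iff.mpr hne] at h1
    simp at h1
  have : Nonempty X := ⟨x₀⟩
  -- kernel with respect to π
  set h : X → X → ℝ := fun x y => k x y / d y with hh
  have hh_cont : Continuous (Function.uncurry h) :=
    hk_cont.div (hd_cont.comp continuous_snd) fun z => (hd_pos z.2).ne'
  obtain ⟨zm, -, hzm⟩ := isCompact_univ.exists_isMinOn Set.univ_nonempty hh_cont.continuousOn
  obtain ⟨zM, -, hzM⟩ := isCompact_univ.exists_isMaxOn Set.univ_nonempty hh_cont.continuousOn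
  set m := Function.uncurry h zm with hm
  set M := Function.uncurry h zM with hM
  have hh_pos : ∀ x y, 0 < h x y := fun x y => div_pos (hk_pos x y) (hd_pos y)
  have hm0 : 0 < m := hh_pos _ _
  have hM0 : 0 < M := hh_pos _ _
  have hlow : ∀ x y, m ≤ h x y := fun x y => hzm (Set.mem_univ (x, y))
  have hup : ∀ x y, h x y ≤ M := fun x y => hzM (Set.mem_univ (x, y))
  have hint : ∀ (g : X → ℝ) x, ∫ y, k x y * g y ∂μ = ∫ y, h x y * g y ∂π := by
    intro g x
    rw [hπ, integral_withDensity_eq_integral_toReal_smul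
      (hd_cont.measurable.ennreal_ofReal) (by simp)]
    congr 1
    ext y
    rw [ENNReal.toReal_ofReal (hd_pos y).le, smul_eq_mul, hh]
    have := (hd_pos y).ne'
    field_simp
  have hK' : ∀ g : Lp ℝ p π, (K g : X → ℝ) =ᵐ[π] fun x => ∫ y, h x y * g y ∂π := by
    intro g
    filter_upwards [hK g] with x hx
    rw [hx, hint]
  have hcx : ∀ x, Continuous (h x) := fun x => hh_cont.comp (by fun_prop : Continuous fun y => (x, y))
  have hp1 : (1 : ℝ≥0∞) ≤ p := Fact.out
  have hgi : ∀ g : Lp ℝ p π, Integrable (g : X → ℝ) π := fun g => (Lp.memLp g).integrable hp1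
  have hg1 : ∀ g : Lp ℝ p π, ∫ y, ‖g y‖ ∂π ≤ ‖g‖ := by
    intro g
    rw [integral_norm_eq_lintegral_enorm (hgi g).1, ← eLpNorm_one_eq_lintegral_enorm, Lp.norm_def]
    exact ENNReal.toReal_mono (Lp.eLpNorm_ne_top g)
      (eLpNorm_le_eLpNorm_of_exponent_le hp1 (hgi g).1)
  have hone0 : 0 ≤ one := by
    rw [← Lp.coeFn_nonneg]
    filter_upwards [hone] with x hx
    simp [hx]
  have hp0 : p ≠ 0 := (lt_of_lt_of_le one_pos hp1).ne'
  apply abstract_lim K ?_ one ?_ m M hm0 hM0 ?_ ?_ ?_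
  · intro f hf
    rw [← Lp.coeFn_nonneg] at hf ⊢
    filter_upwards [hK' f] with x hx
    rw [hx]
    apply integral_nonneg_of_ae
    filter_upwards [hf] with y hy
    exact mul_nonneg (hh_pos x y).le hy
  · rw [Lp.norm_def, eLpNorm_congr_ae hone, eLpNorm_const _ hp0 (NeZero.ne π)]
    simp
  · rw [← Lp.coeFn_nonneg]
    filter_upwards [Lp.coeFn_smul m one, hone] with x h1 h2
    rw [h1, Pi.smul_apply, h2]
    simpa using hm0.le
  · rw [← Lp.coeFn_le]
    filter_upwards [Lp.coeFn_smul m one, hone, hK' one] with x h1 h2 h3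
    rw [h1, Pi.smul_apply, h2, h3]
    have h4 : ∫ y, h x y * one y ∂π = ∫ y, h x y ∂π := by
      apply integral_congr_ae
      filter_upwards [hone] with y hy
      rw [hy, mul_one]
    rw [h4]
    have h5 : ∫ _, m ∂π ≤ ∫ y, h x y ∂π := by
      apply integral_mono (integrable_const _) _ (hlow x)
      exact (hcx x).integrable_of_hasCompactSupport (HasCompactSupport.of_compactSpace _)
    simpa using h5
  · intro f
    rw [← Lp.coeFn_le]
    filter_upwards [Lp.coeFn_smul (M * ‖f‖) one, hone, hK' f, Lp.coeFn_abs (K f)] with x h1 h2 h3 h4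
    rw [h1, Pi.smul_apply, h2, h4, h3, smul_eq_mul, mul_one, ← Real.norm_eq_abs]
    calc ‖∫ y, h x y * f y ∂π‖ ≤ ∫ y, M * ‖f y‖ ∂π := by
          apply norm_integral_le_of_norm_le ((hgi f).norm.const_mul M)
          refine Eventually.of_forall fun y => ?_
          rw [norm_mul, Real.norm_of_nonneg (hh_pos x y).le]
          exact mul_le_mul_of_nonneg_right (hup x y) (norm_nonneg _)
      _ = M * ∫ y, ‖f y‖ ∂π := integral_const_mul _ _
      _ ≤ M * ‖f‖ := mul_le_mul_of_nonneg_left (hg1 f) hM0.le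
end

section
/- If Λ_p = β ρ(K)^{1/θ} < 1, then the narrow-framing operator B has a fixed point g* ∈ L_p(X,π)_+, and B is globally stable in the sense that ‖B^n g − g*‖_p → 0 as n → ∞ for every g ∈ L_p(X,π)_+. -/
open MeasureTheory Filter Topology ENNReal

section AbstractPart
variable {E : Type*} [NormedAddCommGroup E] [NormedSpace ℝ E]

lemma nf_summable (L : E →L[ℝ] E) (N : ℕ) (h : ‖L ^ (N+1)‖ < 1) :
    Summable (fun n => ‖L ^ n‖) := by
  rw [← (Nat.divModEquiv (N+1)).symm.summable_iff]
  have h1 : Summable (fun x : ℕ × Fin (N+1) => ‖L^(N+1)‖ ^ x.1 * ‖L ^ (x.2 : ℕ)‖) :=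
    Summable.mul_of_nonneg (f := fun n => ‖L^(N+1)‖ ^ n) (g := fun j : Fin (N+1) => ‖L ^ (j : ℕ)‖)
      (summable_geometric_of_lt_one (norm_nonneg _) h) (Summable.of_finite)
      (fun n => by positivity) (fun n => by positivity)
  refine Summable.of_nonneg_of_le (fun _ => norm_nonneg _) ?_ h1
  rintro ⟨q, j⟩
  have e : (Nat.divModEquiv (N+1)).symm (q, j) = (N+1) * q + j := by
    simp [Nat.divModEquiv, mul_comm]
  simp only [Function.comp, e]
  rw [pow_add, pow_mul]
  rcases Nat.eq_zero_or_pos q with rfl | hq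
  · simp
  · exact (norm_mul_le _ _).trans (mul_le_mul_of_nonneg_right (norm_pow_le' _ hq) (norm_nonneg _))

lemma nf_specRad (K : E →L[ℝ] E) (β θ : ℝ) (hβ0 : 0 < β) (hθ : 0 < θ)
    (hΛ : β * specRad K ^ (1 / θ) < 1) :
    ∃ r, β ^ θ < r ∧ Summable (fun n => ‖(r • K) ^ n‖) := by
  have hρ : 0 ≤ specRad K := Real.iInf_nonneg fun n => by positivity
  have h1 : specRad K < (1/β) ^ θ := by
    have : specRad K ^ (1/θ) < 1/β := by rw [lt_div_iff₀ hβ0]; linarith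
    have h2 := Real.rpow_lt_rpow (by positivity) this hθ
    rwa [← Real.rpow_mul hρ, one_div_mul_cancel hθ.ne', Real.rpow_one] at h2
  obtain ⟨n, hn⟩ := exists_lt_of_ciInf_lt h1
  obtain ⟨x, hx1, hx2⟩ := exists_between hn
  have hx0 : 0 < x := lt_of_le_of_lt (by positivity) hx1
  refine ⟨1/x, ?_, nf_summable _ n ?_⟩
  · rw [lt_div_iff₀ hx0]
    have : β ^ θ * (1/β)^θ = 1 := by
      rw [← Real.mul_rpow hβ0.le (by positivity)]; simp [hβ0.ne']
    have h3 := mul_lt_mul_of_pos_left hx2 (Real.rpow_pos_of_pos hβ0 θ)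
    linarith
  · have h3 : ‖K ^ (n+1)‖ < x ^ (n+1) := by
      have h2 := Real.rpow_lt_rpow (by positivity) hx1 (z := ((n:ℝ)+1)) (by positivity)
      rw [← Real.rpow_mul (by positivity), one_div_mul_cancel (by positivity), Real.rpow_one] at h2
      exact_mod_cast h2
    rw [smul_pow, norm_smul, norm_pow, Real.norm_of_nonneg (by positivity), one_div, inv_pow,
      inv_mul_lt_iff₀ (by positivity)]
    simpa using h3

variable [Lattice E] [HasSolidNorm E] [IsOrderedAddMonoid E] [IsOrderedModule ℝ E] [CompleteSpace E]

lemma nf_pow_nonneg (L : E →L[ℝ] E) (hL : ∀ g, 0 ≤ g → 0 ≤ L g) (n : ℕ) {g : E} (hg : 0 ≤ g) :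
    0 ≤ (L ^ n) g := by
  induction n with
  | zero => simpa
  | succ n ih => rw [pow_succ']; exact hL _ ih

lemma nf_affine (L : E →L[ℝ] E) (hL : ∀ g, 0 ≤ g → 0 ≤ L g)
    (hs : Summable (fun n => ‖L ^ n‖)) (w : E) (hw : 0 ≤ w) :
    ∃ v, w ≤ v ∧ v = w + L v := by
  have hsum : Summable (fun n => (L ^ n) w) :=
    Summable.of_norm_bounded (hs.mul_right ‖w‖) (fun n => (L^n).le_opNorm w)
  have he : ∑' n, (L ^ n) w = w + L (∑' n, (L ^ n) w) := by
    conv_lhs => rw [hsum.tsum_eq_zero_add]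
    rw [L.map_tsum hsum]
    simp [pow_succ']
  refine ⟨∑' n, (L ^ n) w, ?_, he⟩
  conv_rhs => rw [he]
  exact le_add_of_nonneg_right (hL _ (tsum_nonneg fun n => nf_pow_nonneg L hL n hw))

lemma nf_convex (P : E → Prop) (B : E → E) (w : E) (hP : ∀ g h, P g → g ≤ h → P h) (hw : P w)
    (hB : ∀ g, P g → w ≤ B g)
    (L : E →L[ℝ] E) (hL : ∀ g, 0 ≤ g → 0 ≤ L g)
    (hs : Summable (fun n => ‖L ^ n‖))
    (hlip : ∀ g h, P g → P h → |B g - B h| ≤ L |g - h|) :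
    ∃ gs, P gs ∧ B gs = gs ∧ ∀ g, P g → Tendsto (fun n => B^[n] g) atTop (𝓝 gs) := by
  have hPB : ∀ g, P g → P (B g) := fun g hg => hP _ _ hw (hB g hg)
  have hPn : ∀ n g, P g → P (B^[n] g) := by
    intro n; induction n with
    | zero => intro g hg; exact hg
    | succ n ih => intro g hg; exact ih _ (hPB g hg)
  have hn : ∀ n g h, P g → P h → |B^[n] g - B^[n] h| ≤ (L ^ n) |g - h| := by
    intro n g h hg hh
    induction n with
    | zero => simp
    | succ n ih =>
      rw [Function.iterate_succ_apply', Function.iterate_succ_apply']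
      refine (hlip _ _ (hPn n g hg) (hPn n h hh)).trans ?_
      have := hL _ (sub_nonneg.2 ih)
      rw [map_sub, sub_nonneg] at this
      rw [pow_succ']; exact this
  have hnn : ∀ n g h, P g → P h → ‖B^[n] g - B^[n] h‖ ≤ ‖L ^ n‖ * ‖g - h‖ := by
    intro n g h hg hh
    have h1 := hn n g h hg hh
    have h2 : |B^[n] g - B^[n] h| ≤ abs ((L ^ n) (abs (g - h))) := h1.trans (le_abs_self _)
    have h3 := norm_le_norm_of_abs_le_abs h2
    refine h3.trans (((L^n).le_opNorm _).trans ?_)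
    rw [norm_abs_eq_norm]
  have hc : CauchySeq (fun n => B^[n] w) := by
    apply cauchySeq_of_summable_dist
    refine Summable.of_nonneg_of_le (fun _ => dist_nonneg) (fun n => ?_) (hs.mul_right ‖w - B w‖)
    rw [dist_eq_norm, Function.iterate_succ_apply]
    exact hnn n _ _ hw (hPB w hw)
  obtain ⟨gs, hgs⟩ := cauchySeq_tendsto_of_complete hc
  have hgs1 := (tendsto_add_atTop_iff_nat 1).2 hgs
  have hge : w ≤ gs := ge_of_tendsto' hgs1 fun n => by
    rw [Function.iterate_succ_apply']; exact hB _ (hPn n w hw)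
  have hPg : P gs := hP _ _ hw hge
  have hfix : B gs = gs := by
    refine tendsto_nhds_unique ?_ hgs1
    rw [tendsto_iff_norm_sub_tendsto_zero]
    have h0 := (tendsto_iff_norm_sub_tendsto_zero.1 hgs).const_mul ‖L^1‖
    rw [mul_zero] at h0
    refine squeeze_zero (fun _ => norm_nonneg _) (fun n => ?_) h0
    rw [Function.iterate_succ_apply']
    exact hnn 1 _ _ (hPn n w hw) hPg
  refine ⟨gs, hPg, hfix, fun g hg => ?_⟩
  rw [tendsto_iff_norm_sub_tendsto_zero]
  have h0 := hs.tendsto_atTop_zero.mul_const ‖g - gs‖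
  rw [zero_mul] at h0
  refine squeeze_zero (fun _ => norm_nonneg _) (fun n => ?_) h0
  have := hnn n g gs hg hPg
  rwa [Function.iterate_fixed hfix] at this

lemma nf_concave (P : E → Prop) (B : E → E) (w : E) (hP : ∀ g h, P g → g ≤ h → P h) (hw : P w)
    (hP0 : ∀ g, P g → 0 ≤ g)
    (hPs : ∀ g (t : ℝ), 0 < t → P g → P (t • g))
    (hB : ∀ g, P g → w ≤ B g)
    (hmono : ∀ g h, P g → P h → g ≤ h → B g ≤ B h)
    (hconc : ∀ g (t : ℝ), P g → 0 < t → t ≤ 1 → t • B g + (1 - t) • w ≤ B (t • g))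
    (hbdd : ∀ g, P g → ∃ c : ℝ, 0 < c ∧ c ≤ 1 ∧ c • B g ≤ w)
    (C : ℝ) (hlip : ∀ g h, P g → P h → ‖B g - B h‖ ≤ C * ‖g - h‖)
    (hv : ∃ v, P v ∧ B v ≤ v) :
    ∃ gs, P gs ∧ B gs = gs ∧ ∀ g, P g → Tendsto (fun n => B^[n] g) atTop (𝓝 gs) := by
  have hPB : ∀ g, P g → P (B g) := fun g hg => hP _ _ hw (hB g hg)
  have hPn : ∀ n g, P g → P (B^[n] g) := by
    intro n; induction n with
    | zero => intro g hg; exact hg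
    | succ n ih => intro g hg; exact ih _ (hPB g hg)
  have hc0 : ∀ c : ℝ, 0 < c → c ≤ 1 → ∀ n, 0 ≤ (1 - c)^n ∧ (1-c)^n ≤ 1 := fun c h0 h1 n =>
    ⟨pow_nonneg (by linarith) _, pow_le_one₀ (by linarith) (by linarith)⟩
  -- existence
  have hex : ∃ gs, P gs ∧ B gs = gs := by
    obtain ⟨v, hPv, hvB⟩ := hv
    obtain ⟨c, hcp, hc1, hcw⟩ := hbdd v hPv
    set u := B v with hu
    have hPu : P u := hPB v hPv
    have hdec : ∀ n, B^[n+1] u ≤ B^[n] u := by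
      intro n; induction n with
      | zero => exact hmono _ _ hPu hPv hvB
      | succ n ih =>
        rw [Function.iterate_succ_apply' B (n+1), Function.iterate_succ_apply' B n]
        have := hmono _ _ (hPn (n+1) u hPu) (hPn n u hPu) ih
        rwa [Function.iterate_succ_apply' B n] at this
    have hle : ∀ n, B^[n] u ≤ u := by
      intro n; induction n with
      | zero => exact le_rfl
      | succ n ih => exact (hdec n).trans ih
    have hkey : ∀ n, (1 - (1-c)^(n+1)) • B^[n] u ≤ B^[n+1] u := by
      intro n; induction n with
      | zero =>
        simp only [zero_add, pow_one, _root_.sub_sub_cancel, Function.iterate_zero, id,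
          Function.iterate_one]
        exact hcw.trans (hB _ hPu)
      | succ n ih =>
        have hlt : (1-c)^(n+1) < 1 := pow_lt_one₀ (by linarith) (by linarith) (by simp)
        set t := 1 - (1-c)^(n+1) with ht
        have ht0 : 0 < t := by linarith
        have ht1 : t ≤ 1 := by have := (hc0 c hcp hc1 (n+1)).1; linarith
        have h1 := hmono _ _ (hPs _ t ht0 (hPn n u hPu)) (hPn (n+1) u hPu) ih
        have h2 := hconc _ t (hPn n u hPu) ht0 ht1
        rw [← Function.iterate_succ_apply' B (n+1)] at h1
        refine le_trans ?_ (h2.trans h1)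
        rw [← Function.iterate_succ_apply' B n]
        have h3 : c • B^[n+1] u ≤ w := (smul_le_smul_of_nonneg_left (hle _) hcp.le).trans hcw
        have h4 := smul_le_smul_of_nonneg_left h3 (sub_nonneg.2 ht1)
        have h5 : (1 - (1-c)^(n+1+1)) • B^[n+1] u
            = t • B^[n+1] u + (1 - t) • c • B^[n+1] u := by
          rw [smul_smul, ← add_smul]; congr 1; rw [ht]; ring
        rw [h5]
        exact add_le_add le_rfl h4
    have hc : CauchySeq (fun n => B^[n] u) := by
      apply cauchySeq_of_le_geometric (1-c) ‖u‖ (by linarith)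
      intro n
      rw [dist_eq_norm, mul_comm]
      have h1 : |B^[n] u - B^[n+1] u| ≤ |(1-c)^n • u| := by
        rw [abs_of_nonneg (sub_nonneg.2 (hdec n))]
        refine le_trans ?_ (le_abs_self _)
        have h2 := hkey n
        rw [sub_smul, one_smul, sub_le_comm] at h2
        refine h2.trans ?_
        refine (smul_le_smul_of_nonneg_left (hle n) (hc0 c hcp hc1 _).1).trans ?_
        refine smul_le_smul_of_nonneg_right ?_ (hP0 u hPu)
        exact pow_le_pow_of_le_one (by linarith) (by linarith) (by simp)
      have h2 := norm_le_norm_of_abs_le_abs h1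
      rwa [norm_smul, Real.norm_of_nonneg (hc0 c hcp hc1 n).1] at h2
    obtain ⟨gs, hgs⟩ := cauchySeq_tendsto_of_complete hc
    have hgs1 := (tendsto_add_atTop_iff_nat 1).2 hgs
    have hge : w ≤ gs := ge_of_tendsto' hgs1 fun n => by
      rw [Function.iterate_succ_apply']; exact hB _ (hPn n u hPu)
    have hPg : P gs := hP _ _ hw hge
    refine ⟨gs, hPg, tendsto_nhds_unique ?_ hgs1⟩
    rw [tendsto_iff_norm_sub_tendsto_zero]
    have h0 := (tendsto_iff_norm_sub_tendsto_zero.1 hgs).const_mul C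
    rw [mul_zero] at h0
    refine squeeze_zero (fun _ => norm_nonneg _) (fun n => ?_) h0
    rw [Function.iterate_succ_apply']
    exact hlip _ _ (hPn n u hPu) hPg
  obtain ⟨gs, hPg, hfix⟩ := hex
  refine ⟨gs, hPg, hfix, fun g hg => ?_⟩
  obtain ⟨c, hcp, hc1, hcw⟩ := hbdd gs hPg
  rw [hfix] at hcw
  obtain ⟨e, hep, he1, hew⟩ := hbdd g hg
  have hwg : w ≤ gs := hfix ▸ hB gs hPg
  rw [← tendsto_add_atTop_iff_nat 1]
  simp only [Function.iterate_succ_apply]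
  set u := B g with hu
  have hPu : P u := hPB g hg
  have hlow : ∀ n, (1 - (1-c)^(n+1)) • gs ≤ B^[n] u := by
    intro n; induction n with
    | zero =>
      simp only [zero_add, pow_one, _root_.sub_sub_cancel, Function.iterate_zero, id]
      exact hcw.trans (hB _ hg)
    | succ n ih =>
      have hlt : (1-c)^(n+1) < 1 := pow_lt_one₀ (by linarith) (by linarith) (by simp)
      set t := 1 - (1-c)^(n+1) with ht
      have ht0 : 0 < t := by linarith
      have ht1 : t ≤ 1 := by have := (hc0 c hcp hc1 (n+1)).1; linarith
      have h1 := hmono _ _ (hPs _ t ht0 hPg) (hPn n u hPu) ih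
      have h2 := hconc _ t hPg ht0 ht1
      rw [← Function.iterate_succ_apply' B n] at h1
      refine le_trans ?_ (h2.trans h1)
      rw [hfix]
      have h4 := smul_le_smul_of_nonneg_left hcw (sub_nonneg.2 ht1)
      have h5 : (1 - (1-c)^(n+1+1)) • gs = t • gs + (1 - t) • c • gs := by
        rw [smul_smul, ← add_smul]; congr 1; rw [ht]; ring
      rw [h5]
      exact add_le_add le_rfl h4
  have hstep : ∀ s : ℝ, 1 ≤ s → B (s • gs) ≤ (1 + (1-c) * (s-1)) • gs := by
    intro s hs
    have hs0 : 0 < s := by linarith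
    have h1 := hconc (s • gs) s⁻¹ (hPs _ s hs0 hPg) (by positivity) (inv_le_one_of_one_le₀ hs)
    rw [smul_smul, inv_mul_cancel₀ hs0.ne', one_smul, hfix] at h1
    have h2 := smul_le_smul_of_nonneg_left h1 hs0.le
    rw [smul_add, smul_smul, smul_smul, mul_inv_cancel₀ hs0.ne', one_smul, mul_sub, mul_one,
      mul_inv_cancel₀ hs0.ne'] at h2
    have h3 := smul_le_smul_of_nonneg_left hcw (sub_nonneg.2 hs)
    have h4 : B (s • gs) ≤ s • gs - (s-1) • c • gs :=
      (le_sub_iff_add_le.2 h2).trans (sub_le_sub_left h3 _)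
    refine h4.trans (le_of_eq ?_)
    rw [smul_smul, ← sub_smul]; congr 1; ring
  have hS : 0 ≤ e⁻¹ - 1 := sub_nonneg.2 ((one_le_inv₀ hep).2 he1)
  have hup : ∀ n, B^[n] u ≤ (1 + (1-c)^n * (e⁻¹ - 1)) • gs := by
    intro n; induction n with
    | zero =>
      simp only [pow_zero, one_mul, add_sub_cancel, Function.iterate_zero, id]
      have := smul_le_smul_of_nonneg_left (hew.trans hwg) (inv_nonneg.2 hep.le)
      rwa [smul_smul, inv_mul_cancel₀ hep.ne', one_smul] at this
    | succ n ih =>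
      have hge : 0 ≤ (1-c)^n * (e⁻¹ - 1) := mul_nonneg (hc0 c hcp hc1 n).1 hS
      have h1 := hmono _ _ (hPn n u hPu) (hPs _ _ (by linarith) hPg) ih
      rw [← Function.iterate_succ_apply' B n] at h1
      refine (h1.trans (hstep _ (by linarith))).trans (le_of_eq ?_)
      congr 1; ring
  rw [tendsto_iff_norm_sub_tendsto_zero]
  have h0 : Tendsto (fun n => (1-c)^n * (e⁻¹ * ‖gs‖)) atTop (𝓝 (0 * (e⁻¹ * ‖gs‖))) :=
    (_root_.tendsto_pow_atTop_nhds_zero_of_lt_one (by linarith) (by linarith)).mul_const _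
  rw [zero_mul] at h0
  refine squeeze_zero (fun _ => norm_nonneg _) (fun n => ?_) h0
  have hq := hc0 c hcp hc1 n
  have hgs0 := hP0 gs hPg
  have h1 : |B^[n] u - gs| ≤ |((1-c)^n * e⁻¹) • gs| := by
    refine le_trans ?_ (le_abs_self _)
    rw [abs_le']
    constructor
    · rw [sub_le_iff_le_add]
      refine (hup n).trans ?_
      rw [show ((1-c)^n * e⁻¹) • gs + gs = ((1-c)^n * e⁻¹ + 1) • gs by rw [add_smul, one_smul]]
      refine smul_le_smul_of_nonneg_right ?_ hgs0
      nlinarith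
    · rw [neg_sub, sub_le_comm]
      refine le_trans ?_ (hlow n)
      rw [show gs - ((1-c)^n * e⁻¹) • gs = (1 - (1-c)^n * e⁻¹) • gs by rw [sub_smul, one_smul]]
      refine smul_le_smul_of_nonneg_right ?_ hgs0
      have : (1-c)^(n+1) ≤ (1-c)^n := pow_le_pow_of_le_one (by linarith) (by linarith) (by simp)
      nlinarith
  have h2 := norm_le_norm_of_abs_le_abs h1
  rwa [norm_smul, Real.norm_of_nonneg (mul_nonneg hq.1 (by positivity)), mul_assoc] at h2

end AbstractPart

/-- The scalar aggregator. -/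
noncomputable def nfφ (β θ t : ℝ) : ℝ := ((1 - β) + β * t ^ (1 / θ)) ^ θ
/-- Its derivative. -/
noncomputable def nfφ' (β θ t : ℝ) : ℝ := β * ((1 - β) * t ^ (-(1 / θ)) + β) ^ (θ - 1)

section Scalar
variable {β θ : ℝ}

lemma nfφ_pos (hβ0 : 0 < β) (hβ1 : β < 1) {t : ℝ} (ht : 0 < t) : 0 < nfφ β θ t := by
  unfold nfφ
  have : 0 < 1 - β := by linarith
  positivity

lemma nfφ_deriv (hβ0 : 0 < β) (hβ1 : β < 1) (hθ : θ ≠ 0) {t : ℝ} (ht : 0 < t) :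
    HasDerivAt (nfφ β θ) (nfφ' β θ t) t := by
  have h1β : 0 < 1 - β := by linarith
  have h1 : HasDerivAt (fun t : ℝ => (1 - β) + β * t ^ (1 / θ))
      (β * ((1/θ) * t ^ (1/θ - 1))) t :=
    ((Real.hasDerivAt_rpow_const (Or.inl ht.ne')).const_mul β).const_add _
  have hA : 0 < (1 - β) + β * t ^ (1 / θ) := by positivity
  have h2 := h1.rpow_const (p := θ) (Or.inl hA.ne')
  have h3 : HasDerivAt (nfφ β θ) _ t := h2
  convert h3 using 1
  unfold nfφ'
  have e1 : (1 - β) * t ^ (-(1 / θ)) + β = ((1 - β) + β * t ^ (1 / θ)) * t ^ (-(1/θ)) := by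
    rw [add_mul, mul_assoc β, ← Real.rpow_add ht]; simp
  rw [e1, Real.mul_rpow hA.le (by positivity), ← Real.rpow_mul ht.le]
  have e2 : -(1/θ) * (θ - 1) = 1/θ - 1 := by field_simp; ring
  rw [e2]
  field_simp

lemma nfφ'_nonneg (hβ0 : 0 < β) (hβ1 : β < 1) {t : ℝ} (ht : 0 < t) : 0 ≤ nfφ' β θ t := by
  unfold nfφ'
  have : 0 < 1 - β := by linarith
  positivity

lemma nfφ_lip (hβ0 : 0 < β) (hβ1 : β < 1) (hθ : θ ≠ 0) {m C : ℝ} (hm : 0 < m)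
    (hC : ∀ t, m ≤ t → nfφ' β θ t ≤ C) {s t : ℝ} (hs : m ≤ s) (ht : m ≤ t) :
    |nfφ β θ s - nfφ β θ t| ≤ C * |s - t| := by
  have := Convex.norm_image_sub_le_of_norm_hasDerivWithin_le (s := Set.Ici m) (f := nfφ β θ)
    (f' := nfφ' β θ) (C := C) (x := t) (y := s)
    (fun x hx => (nfφ_deriv hβ0 hβ1 hθ (lt_of_lt_of_le hm hx)).hasDerivWithinAt)
    (fun x hx => by
      rw [Real.norm_of_nonneg (nfφ'_nonneg hβ0 hβ1 (lt_of_lt_of_le hm hx))]; exact hC x hx)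
    (convex_Ici m) ht hs
  simpa using this

lemma nfφ_mono (hβ0 : 0 < β) (hβ1 : β < 1) (hθ : θ ≠ 0) {s t : ℝ} (hs : 0 < s) (hst : s ≤ t) :
    nfφ β θ s ≤ nfφ β θ t := by
  have h1β : 0 < 1 - β := by linarith
  have ht : 0 < t := by linarith
  unfold nfφ
  rcases lt_or_gt_of_ne hθ with h | h
  · apply Real.rpow_le_rpow_of_nonpos (by positivity) _ h.le
    have := Real.rpow_le_rpow_of_nonpos hs hst (z := 1/θ) (by rw [one_div]; exact (inv_neg''.2 h).le)
    gcongr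
  · gcongr

lemma nfφ'_anti (hβ0 : 0 < β) (hβ1 : β < 1) (hθ : θ < 0 ∨ 1 ≤ θ) {s t : ℝ} (hs : 0 < s)
    (hst : s ≤ t) : nfφ' β θ t ≤ nfφ' β θ s := by
  have h1β : 0 < 1 - β := by linarith
  have ht : 0 < t := by linarith
  unfold nfφ'
  apply mul_le_mul_of_nonneg_left _ hβ0.le
  rcases hθ with h | h
  · apply Real.rpow_le_rpow_of_nonpos (by positivity) _ (by linarith)
    have : 0 ≤ -(1/θ) := by rw [one_div, ← inv_neg]; exact inv_nonneg.2 (by linarith)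
    have := Real.rpow_le_rpow hs.le hst this
    gcongr
  · apply Real.rpow_le_rpow (by positivity) _ (by linarith)
    have : -(1/θ) ≤ 0 := by have : 0 < θ := by linarith
                            simp; positivity
    have := Real.rpow_le_rpow_of_nonpos hs hst this
    gcongr

lemma nfφ'_le (hβ0 : 0 < β) (hβ1 : β < 1) (hθ1 : θ ≤ 1) {t : ℝ} (ht : 0 < t) :
    nfφ' β θ t ≤ β ^ θ := by
  have h1β : 0 < 1 - β := by linarith
  unfold nfφ'
  have h : ((1 - β) * t ^ (-(1 / θ)) + β) ^ (θ - 1) ≤ β ^ (θ - 1) := by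
    apply Real.rpow_le_rpow_of_nonpos hβ0 _ (by linarith)
    have : 0 < (1 - β) * t ^ (-(1 / θ)) := by positivity
    linarith
  have e : β ^ θ = β * β ^ (θ - 1) := by
    rw [Real.rpow_sub_one hβ0.ne']; field_simp
  rw [e]; gcongr

lemma nfφ_concave (hβ0 : 0 < β) (hβ1 : β < 1) (hθ : θ < 0 ∨ 1 ≤ θ) :
    ConcaveOn ℝ (Set.Ioi 0) (nfφ β θ) := by
  have hθ0 : θ ≠ 0 := by rcases hθ with h | h <;> intro h' <;> linarith
  apply AntitoneOn.concaveOn_of_deriv (convex_Ioi 0)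
  · exact fun x hx => (nfφ_deriv hβ0 hβ1 hθ0 hx).continuousAt.continuousWithinAt
  · intro x hx
    rw [interior_Ioi] at hx
    exact (nfφ_deriv hβ0 hβ1 hθ0 hx).differentiableAt.differentiableWithinAt
  · intro x hx y hy hxy
    rw [interior_Ioi] at hx hy
    rw [(nfφ_deriv hβ0 hβ1 hθ0 hx).deriv, (nfφ_deriv hβ0 hβ1 hθ0 hy).deriv]
    exact nfφ'_anti hβ0 hβ1 hθ hx hxy

lemma nfφ_affine (hβ0 : 0 < β) (hβ1 : β < 1) (hθ : 1 ≤ θ) {r : ℝ} (hr : β ^ θ < r) :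
    ∃ C, 0 < C ∧ ∀ t, 0 < t → nfφ β θ t ≤ C + r * t := by
  have hθ0 : 0 < θ := by linarith
  have hr0 : 0 < r := lt_trans (by positivity) hr
  have h1 : Tendsto (nfφ' β θ) atTop (𝓝 (β * ((1-β) * 0 + β) ^ (θ - 1))) := by
    unfold nfφ'
    refine Tendsto.const_mul _ (Tendsto.rpow_const ?_ (Or.inr (by linarith)))
    exact ((tendsto_rpow_neg_atTop (by positivity)).const_mul _).add_const _
  have e : β * ((1-β) * 0 + β) ^ (θ - 1) = β ^ θ := by
    rw [mul_zero, zero_add, Real.rpow_sub_one hβ0.ne']; field_simp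
  rw [e] at h1
  obtain ⟨T, hT⟩ := eventually_atTop.1 (h1.eventually_le_const hr)
  set T' := max T 1
  have hT0 : 0 < T' := lt_of_lt_of_le one_pos (le_max_right _ _)
  refine ⟨nfφ β θ T', nfφ_pos hβ0 hβ1 hT0, fun t ht => ?_⟩
  rcases le_total t T' with h | h
  · have := nfφ_mono hβ0 hβ1 hθ0.ne' ht h
    nlinarith
  · have := nfφ_lip hβ0 hβ1 hθ0.ne' hT0 (C := r)
      (fun t ht => hT t ((le_max_left _ _).trans ht)) h le_rfl
    have h2 := (le_abs_self _).trans this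
    rw [abs_of_nonneg (by linarith)] at h2
    nlinarith

end Scalar

lemma nf_orderedModule {X : Type*} [MeasurableSpace X] (π : Measure X) (p : ℝ≥0∞) [Fact (1 ≤ p)] :
    IsOrderedModule ℝ (Lp ℝ p π) := by
  refine IsOrderedModule.of_smul_nonneg fun a ha f hf => ?_
  rw [← Lp.coeFn_nonneg] at hf ⊢
  filter_upwards [hf, Lp.coeFn_smul a f] with x h1 h2
  rw [h2]
  exact mul_nonneg ha h1

theorem narrow_framing_existence_stability
    {X : Type*} [MetricSpace X] [CompactSpace X] [MeasurableSpace X] [BorelSpace X]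
    (μ π : Measure X) [IsFiniteMeasure μ] [μ.IsOpenPosMeasure] [IsProbabilityMeasure π]
    (d : X → ℝ) (hd_cont : Continuous d) (hd_pos : ∀ x, 0 < d x)
    (hπ : π = μ.withDensity (fun x => ENNReal.ofReal (d x)))
    (p : ℝ≥0∞) [Fact (1 ≤ p)] (hp_top : p ≠ ⊤)
    (k : X → X → ℝ) (hk_cont : Continuous (Function.uncurry k))
    (hk_pos : ∀ x y, 0 < k x y)
    (K : Lp ℝ p π →L[ℝ] Lp ℝ p π)
    (hK : ∀ g : Lp ℝ p π, (K g : X → ℝ) =ᵐ[π] fun x => ∫ y, k x y * g y ∂μ)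
    (β θ : ℝ) (hβ0 : 0 < β) (hβ1 : β < 1) (hθ : θ ≠ 0)
    (b : X → ℝ) (hb_cont : Continuous b) (hb_pos : ∀ x, 0 < b x)
    (B : Lp ℝ p π → Lp ℝ p π)
    (hB : ∀ g : Lp ℝ p π, (∀ᵐ x ∂π, 0 < g x) →
      (B g : X → ℝ) =ᵐ[π]
        fun x => ((1 - β) + β * ((K g : X → ℝ) x + b x) ^ (1 / θ)) ^ θ)
    (hΛ : β * specRad K ^ (1 / θ) < 1) :
    ∃ gstar : Lp ℝ p π, (∀ᵐ x ∂π, 0 < gstar x) ∧ B gstar = gstar ∧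
      ∀ g : Lp ℝ p π, (∀ᵐ x ∂π, 0 < g x) →
        Tendsto (fun n => B^[n] g) atTop (𝓝 gstar) := by
  haveI := nf_orderedModule π p
  have hne : Nonempty X := π.nonempty_of_neZero
  obtain ⟨xd, -, hxd⟩ := isCompact_univ.exists_isMinOn Set.univ_nonempty hd_cont.continuousOn
  obtain ⟨xb, -, hxb⟩ := isCompact_univ.exists_isMinOn Set.univ_nonempty hb_cont.continuousOn
  obtain ⟨xM, -, hxM⟩ := isCompact_univ.exists_isMaxOn Set.univ_nonempty hb_cont.continuousOn
  obtain ⟨xk, -, hxk⟩ := isCompact_univ.exists_isMaxOn Set.univ_nonempty hk_cont.continuousOn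
  have hbm : ∀ x, b xb ≤ b x := fun x => hxb (Set.mem_univ x)
  have hbM : ∀ x, b x ≤ b xM := fun x => hxM (Set.mem_univ x)
  have hkM : ∀ x y, k x y ≤ Function.uncurry k xk := fun x y => hxk (Set.mem_univ (x, y))
  have hm : 0 < b xb := hb_pos xb
  -- comparison of measures
  set δ : ℝ≥0∞ := ENNReal.ofReal (d xd) with hδ
  have hδ0 : δ ≠ 0 := by simpa [hδ] using hd_pos xd
  have hδt : δ ≠ ⊤ := ENNReal.ofReal_ne_top
  have hle : δ • μ ≤ π := by
    rw [hπ, ← withDensity_const]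
    exact withDensity_mono (ae_of_all _ fun x => ENNReal.ofReal_le_ofReal (hxd (Set.mem_univ x)))
  have hac : ∀ {q : X → Prop}, (∀ᵐ x ∂π, q x) → ∀ᵐ x ∂μ, q x := by
    intro q hq
    have h1 := Measure.absolutelyContinuous_of_le hle
    have h2 := (Measure.ae_ennreal_smul_measure_iff hδ0 (p := q) (μ := μ)).1 (h1.ae_le hq)
    exact h2
  have hint : ∀ g : Lp ℝ p π, Integrable g μ := fun g => by
    have h1 : Integrable g π := (Lp.memLp g).integrable Fact.out
    exact (integrable_smul_measure hδ0 hδt).1 (h1.mono_measure hle)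
  -- positivity and boundedness of K
  have hKpos : ∀ g : Lp ℝ p π, 0 ≤ g → 0 ≤ K g := by
    intro g hg
    rw [← Lp.coeFn_nonneg] at hg ⊢
    have hg' := hac hg
    filter_upwards [hK g] with x hx
    rw [hx]
    refine integral_nonneg_of_ae ?_
    filter_upwards [hg'] with y hy
    exact mul_nonneg (hk_pos x y).le hy
  have hKbd : ∀ g : Lp ℝ p π, ∃ M : ℝ, 0 < M ∧ ∀ᵐ x ∂π, K g x ≤ M := by
    intro g
    refine ⟨(∫ y, Function.uncurry k xk * |g y| ∂μ) + 1, ?_, ?_⟩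
    · have : 0 ≤ ∫ y, Function.uncurry k xk * |g y| ∂μ :=
        integral_nonneg fun y => mul_nonneg (hk_pos _ _).le (abs_nonneg _)
      linarith
    · filter_upwards [hK g] with x hx
      rw [hx]
      have h1 : ∫ y, k x y * g y ∂μ ≤ ∫ y, |k x y * g y| ∂μ :=
        (le_abs_self _).trans (abs_integral_le_integral_abs)
      have h2 : ∫ y, |k x y * g y| ∂μ ≤ ∫ y, Function.uncurry k xk * |g y| ∂μ := by
        refine integral_mono_of_nonneg (ae_of_all _ fun y => abs_nonneg _)
          ((hint g).abs.const_mul _) (ae_of_all _ fun y => ?_)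
        simp only [abs_mul, abs_of_pos (hk_pos x y)]
        exact mul_le_mul_of_nonneg_right (hkM x y) (abs_nonneg _)
      linarith
  -- the cone
  set P : Lp ℝ p π → Prop := fun g => ∀ᵐ x ∂π, 0 < g x with hPdef
  have hP0 : ∀ g, P g → 0 ≤ g := fun g hg => by
    rw [← Lp.coeFn_nonneg]; filter_upwards [hg] with x hx; exact hx.le
  have hPup : ∀ g h, P g → g ≤ h → P h := fun g h hg hgh => by
    rw [← Lp.coeFn_le] at hgh
    filter_upwards [hg, hgh] with x h1 h2; exact lt_of_lt_of_le h1 h2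
  have hPs : ∀ g (t : ℝ), 0 < t → P g → P (t • g) := fun g t ht hg => by
    filter_upwards [hg, Lp.coeFn_smul t g] with x h1 h2
    rw [h2]; exact mul_pos ht h1
  have hK0 : ∀ g, P g → ∀ᵐ x ∂π, 0 ≤ K g x := fun g hg =>
    (Lp.coeFn_nonneg _).2 (hKpos g (hP0 g hg))
  have hBφ : ∀ g, P g → ∀ᵐ x ∂π, B g x = nfφ β θ (K g x + b x) := fun g hg => hB g hg
  have hφm : 0 < nfφ β θ (b xb) := nfφ_pos hβ0 hβ1 hm
  -- the function w
  have hwc : Continuous fun x => nfφ β θ (b x) := by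
    rw [continuous_iff_continuousAt]
    intro x
    exact ContinuousAt.comp (f := b) (g := nfφ β θ)
      (nfφ_deriv hβ0 hβ1 hθ (hb_pos x)).continuousAt hb_cont.continuousAt
  have hwmem : MemLp (fun x => nfφ β θ (b x)) p π := by
    refine MemLp.of_bound hwc.aestronglyMeasurable (nfφ β θ (b xM)) (ae_of_all _ fun x => ?_)
    rw [Real.norm_of_nonneg (nfφ_pos hβ0 hβ1 (hb_pos x)).le]
    exact nfφ_mono hβ0 hβ1 hθ (hb_pos x) (hbM x)
  set w : Lp ℝ p π := hwmem.toLp _ with hwdef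
  have hwx : ∀ᵐ x ∂π, w x = nfφ β θ (b x) := hwmem.coeFn_toLp
  have hPw : P w := by
    filter_upwards [hwx] with x hx; rw [hx]; exact nfφ_pos hβ0 hβ1 (hb_pos x)
  have hBw : ∀ g, P g → w ≤ B g := fun g hg => by
    rw [← Lp.coeFn_le]
    filter_upwards [hwx, hBφ g hg, hK0 g hg] with x h1 h2 h3
    rw [h1, h2]
    exact nfφ_mono hβ0 hβ1 hθ (hb_pos x) (by linarith)
  have hKmono : ∀ g h, g ≤ h → ∀ᵐ x ∂π, K g x ≤ K h x := fun g h hgh => by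
    have := hKpos _ (sub_nonneg.2 hgh)
    rw [map_sub, sub_nonneg, ← Lp.coeFn_le] at this
    exact this
  have hlipx : ∀ C : ℝ, (∀ t, b xb ≤ t → nfφ' β θ t ≤ C) → ∀ g h, P g → P h →
      ∀ᵐ x ∂π, |(B g - B h : Lp ℝ p π) x| ≤ C * |K (g - h) x| := by
    intro C hC g h hg hh
    rw [map_sub]
    filter_upwards [hBφ g hg, hBφ h hh, hK0 g hg, hK0 h hh, Lp.coeFn_sub (B g) (B h),
      Lp.coeFn_sub (K g) (K h)] with x h1 h2 h3 h4 h5 h6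
    rw [h5, h6, Pi.sub_apply, Pi.sub_apply, h1, h2]
    have := nfφ_lip hβ0 hβ1 hθ hm hC (s := K g x + b x) (t := K h x + b x)
      (by linarith [hbm x]) (by linarith [hbm x])
    rwa [add_sub_add_right_eq_sub] at this
  by_cases hcase : θ < 0 ∨ 1 ≤ θ
  · -- concave case
    refine nf_concave P B w hPup hPw hP0 hPs hBw ?_ ?_ ?_ (nfφ' β θ (b xb) * ‖K‖) ?_ ?_
    · intro g h hg hh hgh
      rw [← Lp.coeFn_le]
      filter_upwards [hBφ g hg, hBφ h hh, hK0 g hg, hKmono g h hgh] with x h1 h2 h3 h4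
      rw [h1, h2]
      exact nfφ_mono hβ0 hβ1 hθ (by linarith [hb_pos x]) (by linarith)
    · intro g t hg ht0 ht1
      rw [← Lp.coeFn_le]
      have hKt : ∀ᵐ x ∂π, K (t • g) x = t * K g x := by
        rw [map_smul]; exact Lp.coeFn_smul t (K g)
      filter_upwards [hBφ g hg, hBφ _ (hPs g t ht0 hg), hK0 g hg, hwx, hKt,
        Lp.coeFn_add (t • B g) ((1-t) • w), Lp.coeFn_smul t (B g), Lp.coeFn_smul (1-t) w]
        with x h1 h2 h3 h4 h5 h6 h7 h8
      rw [h6, Pi.add_apply, h7, h8, h2, Pi.smul_apply, Pi.smul_apply, h1, h4, h5]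
      have hc := (nfφ_concave hβ0 hβ1 hcase).2 (x := K g x + b x) (y := b x)
        (by simp only [Set.mem_Ioi]; linarith [hb_pos x]) (hb_pos x) ht0.le
        (sub_nonneg.2 ht1) (by ring)
      refine hc.trans (le_of_eq ?_)
      congr 1
      simp only [smul_eq_mul]; ring
    · intro g hg
      obtain ⟨M, hM0, hM⟩ := hKbd g
      have hMp : 0 < nfφ β θ (M + b xM) := nfφ_pos hβ0 hβ1 (by linarith [hb_pos xM])
      refine ⟨nfφ β θ (b xb) / nfφ β θ (M + b xM), div_pos hφm hMp, ?_, ?_⟩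
      · rw [div_le_one hMp]
        exact nfφ_mono hβ0 hβ1 hθ hm (by linarith [hbM xb])
      · rw [← Lp.coeFn_le]
        filter_upwards [hBφ g hg, hK0 g hg, hM, hwx,
          Lp.coeFn_smul (nfφ β θ (b xb) / nfφ β θ (M + b xM)) (B g)] with x h1 h2 h3 h4 h5
        rw [h5, h4, Pi.smul_apply, h1, smul_eq_mul]
        have e1 : nfφ β θ (K g x + b x) ≤ nfφ β θ (M + b xM) :=
          nfφ_mono hβ0 hβ1 hθ (by linarith [hb_pos x]) (by linarith [hbM x])
        have e2 : nfφ β θ (b xb) ≤ nfφ β θ (b x) := nfφ_mono hβ0 hβ1 hθ hm (hbm x)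
        refine le_trans ?_ e2
        rw [div_mul_eq_mul_div, div_le_iff₀ hMp]
        exact mul_le_mul_of_nonneg_left e1 hφm.le
    · intro g h hg hh
      have h1 := hlipx _ (fun t ht => nfφ'_anti hβ0 hβ1 hcase hm ht) g h hg hh
      have h2 : ‖B g - B h‖ ≤ nfφ' β θ (b xb) * ‖K (g - h)‖ :=
        Lp.norm_le_mul_norm_of_ae_le_mul h1
      refine h2.trans ?_
      rw [mul_assoc]
      exact mul_le_mul_of_nonneg_left (K.le_opNorm _) (nfφ'_nonneg hβ0 hβ1 hm)
    · rcases hcase with hneg | hge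
      · have h1β : 0 < 1 - β := by linarith
        have hcx : ∀ᵐ x ∂π, (Lp.const p π ((1-β)^θ) : Lp ℝ p π) x = (1-β)^θ :=
          Lp.coeFn_const p π _
        have hPc : P (Lp.const p π ((1-β)^θ)) := by
          filter_upwards [hcx] with x hx; rw [hx]; positivity
        refine ⟨Lp.const p π ((1-β)^θ), hPc, ?_⟩
        rw [← Lp.coeFn_le]
        filter_upwards [hcx, hBφ _ hPc, hK0 _ hPc] with x h1 h2 h3
        rw [h1, h2]
        unfold nfφ
        apply Real.rpow_le_rpow_of_nonpos h1β _ hneg.le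
        have : 0 < K (Lp.const p π ((1-β)^θ)) x + b x := by linarith [hb_pos x]
        have : 0 < β * (K (Lp.const p π ((1-β)^θ)) x + b x) ^ (1/θ) := by positivity
        linarith
      · have hθ0 : 0 < θ := by linarith
        obtain ⟨r, hr, hs⟩ := nf_specRad K β θ hβ0 hθ0 hΛ
        have hr0 : 0 < r := lt_trans (by positivity) hr
        obtain ⟨C, hC0, hC⟩ := nfφ_affine hβ0 hβ1 hge hr
        have hcx : ∀ᵐ x ∂π, (Lp.const p π (C + r * b xM) : Lp ℝ p π) x = C + r * b xM :=
          Lp.coeFn_const p π _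
        have hPc : P (Lp.const p π (C + r * b xM)) := by
          filter_upwards [hcx] with x hx
          rw [hx]; have := hb_pos xM; positivity
        obtain ⟨v, hv1, hv2⟩ := nf_affine (r • K)
          (fun g hg => smul_nonneg hr0.le (hKpos g hg)) hs _ (hP0 _ hPc)
        have hPv := hPup _ _ hPc hv1
        refine ⟨v, hPv, ?_⟩
        have hvx : ∀ᵐ x ∂π, v x = C + r * b xM + r * K v x := by
          have e : ∀ᵐ x ∂π, v x = (Lp.const p π (C + r * b xM) + (r • K) v : Lp ℝ p π) x := by
            rw [← hv2]; exact ae_of_all _ fun _ => rfl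
          filter_upwards [e, hcx, Lp.coeFn_add (Lp.const p π (C + r * b xM)) ((r • K) v),
            Lp.coeFn_smul r (K v)] with x h1 h2 h3 h4
          rw [h1, h3, Pi.add_apply, h2, ContinuousLinearMap.smul_apply, h4]; rfl
        rw [← Lp.coeFn_le]
        filter_upwards [hvx, hBφ v hPv, hK0 v hPv] with x h1 h2 h3
        rw [h2]
        have h4 := hC (K v x + b x) (by linarith [hb_pos x])
        have h5 := mul_le_mul_of_nonneg_left (hbM x) hr0.le
        rw [h1]
        nlinarith
  · -- convex case
    push Not at hcase
    have hθ0 : 0 < θ := lt_of_le_of_ne hcase.1 hθ.symm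
    obtain ⟨r, hr, hs⟩ := nf_specRad K β θ hβ0 hθ0 hΛ
    have hr0 : 0 < r := lt_trans (by positivity) hr
    refine nf_convex P B w hPup hPw hBw (r • K)
      (fun g hg => smul_nonneg hr0.le (hKpos g hg)) hs ?_
    intro g h hg hh
    have h1 := hlipx r (fun t ht =>
      (nfφ'_le hβ0 hβ1 hcase.2.le (lt_of_lt_of_le hm ht)).trans hr.le) g h hg hh
    have h2 := hKmono _ _ (le_abs_self (g - h))
    have h3 := hKmono _ _ (neg_le_abs (g - h))
    rw [map_neg] at h3
    rw [← Lp.coeFn_le]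
    filter_upwards [h1, h2, h3, Lp.coeFn_abs (B g - B h), Lp.coeFn_neg (K (g - h)),
      Lp.coeFn_smul r (K |g - h|)] with x h1 h2 h3 h4 h5 h6
    rw [h4, ContinuousLinearMap.smul_apply, h6]
    refine h1.trans (mul_le_mul_of_nonneg_left ?_ hr0.le)
    rw [h5] at h3
    exact abs_le'.2 ⟨h2, h3⟩
end

section
/- Under the stated assumptions, the following statements are equivalent: (a) Λ_p = β ρ(K)^{1/θ} < 1; (b) A has a fixed point in L_p(X,π)_+; (c) there exists g ∈ L_p(X,π)_+ such that the sequence of iterates (A^n g)_{n∈ℕ} converges in L_p(X,π)-norm to an element of L_p(X,π)_+. -/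
open MeasureTheory Filter Topology ENNReal

set_option linter.unusedSectionVars false
set_option linter.deprecated false

section BanachLattice

variable {E : Type*} [NormedAddCommGroup E] [NormedSpace ℝ E]

lemma specRad_bddBelow (K : E →L[ℝ] E) :
    BddBelow (Set.range fun n : ℕ => ‖K ^ (n + 1)‖ ^ (1 / (n + 1) : ℝ)) :=
  ⟨0, by rintro _ ⟨n, rfl⟩; positivity⟩

lemma specRad_nonneg (K : E →L[ℝ] E) : 0 ≤ specRad K :=
  Real.iInf_nonneg fun n => by positivity

/-- Above the spectral radius some power is small. -/
lemma exists_norm_pow_lt (K : E →L[ℝ] E) {l : ℝ} (hl : specRad K < l) :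
    ∃ N : ℕ, 0 < N ∧ ‖K ^ N‖ < l ^ N := by
  obtain ⟨n, hn⟩ := exists_lt_of_ciInf_lt hl
  refine ⟨n + 1, n.succ_pos, ?_⟩
  have h0 : 0 ≤ ‖K ^ (n + 1)‖ := norm_nonneg _
  have h1 := Real.rpow_lt_rpow (z := ((n + 1 : ℕ) : ℝ)) (by positivity) hn (by positivity)
  rw [← Real.rpow_mul h0, Real.rpow_natCast] at h1
  have : (1 / ((n : ℝ) + 1) * ((n + 1 : ℕ) : ℝ)) = 1 := by
    push_cast; field_simp
  rwa [this, Real.rpow_one] at h1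

/-- Geometric lower bounds on powers bound the spectral radius from below. -/
lemma le_specRad (K : E →L[ℝ] E) {m : ℝ} (hm : 0 ≤ m) (h : ∀ n : ℕ, m ^ n ≤ ‖K ^ n‖) :
    m ≤ specRad K := by
  refine le_ciInf fun n => ?_
  have h1 := Real.rpow_le_rpow (z := (1 / ((n : ℝ) + 1))) (by positivity) (h (n + 1))
    (by positivity)
  rw [← Real.rpow_natCast, ← Real.rpow_mul hm] at h1
  have : (((n + 1 : ℕ) : ℝ) * (1 / ((n : ℝ) + 1))) = 1 := by
    push_cast; field_simp
  rwa [this, Real.rpow_one] at h1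

/-- Geometric upper bounds on powers bound the spectral radius from above. -/
lemma specRad_le_of_bound (K : E →L[ℝ] E) {s M : ℝ} (hs : 0 < s)
    (h : ∀ n : ℕ, ‖K ^ n‖ ≤ M * s ^ n) : specRad K ≤ s := by
  have hM : 0 < max M 1 := lt_max_of_lt_right one_pos
  have key : ∀ n : ℕ, specRad K ≤ (max M 1) ^ (1 / ((n : ℝ) + 1)) * s := by
    intro n
    refine (ciInf_le (specRad_bddBelow K) n).trans ?_
    have h1 : ‖K ^ (n + 1)‖ ≤ max M 1 * s ^ (n + 1) :=
      (h (n + 1)).trans (by gcongr; exact le_max_left _ _)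
    have h2 := Real.rpow_le_rpow (z := (1 / ((n : ℝ) + 1))) (norm_nonneg _) h1 (by positivity)
    rw [Real.mul_rpow hM.le (by positivity), ← Real.rpow_natCast s, ← Real.rpow_mul hs.le] at h2
    have : (((n + 1 : ℕ) : ℝ) * (1 / ((n : ℝ) + 1))) = 1 := by
      push_cast; field_simp
    rwa [this, Real.rpow_one] at h2
  have hlim : Tendsto (fun n : ℕ => (max M 1) ^ (1 / ((n : ℝ) + 1)) * s) atTop
      (𝓝 ((max M 1) ^ (0 : ℝ) * s)) := by
    refine Tendsto.mul_const _ ?_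
    exact (Real.continuous_const_rpow hM.ne').continuousAt.tendsto.comp
      tendsto_one_div_add_atTop_nhds_zero_nat
  rw [Real.rpow_zero, one_mul] at hlim
  exact ge_of_tendsto' hlim key

variable [Lattice E] [HasSolidNorm E] [IsOrderedAddMonoid E]

/-- Positive operators. -/
def OpPos (T : E →L[ℝ] E) : Prop := ∀ x, 0 ≤ x → 0 ≤ T x

lemma OpPos.mono {T : E →L[ℝ] E} (hT : OpPos T) {x y : E} (h : x ≤ y) : T x ≤ T y := by
  have := hT (y - x) (sub_nonneg.2 h)
  rwa [map_sub, sub_nonneg] at this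

lemma OpPos.abs_le {T : E →L[ℝ] E} (hT : OpPos T) (x : E) : |T x| ≤ T |x| := by
  refine abs_le'.2 ⟨hT.mono (le_abs_self x), ?_⟩
  rw [← map_neg]
  exact hT.mono (neg_le_abs x)

lemma OpPos.mul {S T : E →L[ℝ] E} (hS : OpPos S) (hT : OpPos T) : OpPos (S * T) :=
  fun x hx => hS _ (hT x hx)

lemma OpPos.pow {T : E →L[ℝ] E} (hT : OpPos T) (n : ℕ) : OpPos (T ^ n) := by
  induction n with
  | zero => intro x hx; simpa using hx
  | succ n ih => rw [pow_succ]; exact ih.mul hT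

lemma OpPos.smul [PosSMulMono ℝ E] {T : E →L[ℝ] E} (hT : OpPos T) {c : ℝ} (hc : 0 ≤ c) :
    OpPos (c • T) :=
  fun x hx => smul_nonneg hc (hT x hx)

lemma OpPos.sum {ι : Type*} {T : ι → E →L[ℝ] E} (s : Finset ι) (hT : ∀ i, OpPos (T i)) :
    OpPos (∑ i ∈ s, T i) := by
  intro x hx
  rw [ContinuousLinearMap.sum_apply]
  exact Finset.sum_nonneg fun i _ => hT i x hx

lemma norm_le_norm_of_nonneg_le {x y : E} (hx : 0 ≤ x) (h : x ≤ y) : ‖x‖ ≤ ‖y‖ :=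
  norm_le_norm_of_abs_le_abs (by rwa [abs_of_nonneg hx, abs_of_nonneg (hx.trans h)])

lemma OpPos.norm_le {S T : E →L[ℝ] E} (hT : OpPos T) (h : ∀ x, 0 ≤ x → T x ≤ S x) :
    ‖T‖ ≤ ‖S‖ := by
  refine T.opNorm_le_bound (norm_nonneg _) fun x => ?_
  calc ‖T x‖ = ‖|T x|‖ := (norm_abs_eq_norm _).symm
    _ ≤ ‖S |x|‖ := norm_le_norm_of_nonneg_le (abs_nonneg _)
        ((hT.abs_le x).trans (h _ (abs_nonneg x)))
    _ ≤ ‖S‖ * ‖|x|‖ := S.le_opNorm _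
    _ = ‖S‖ * ‖x‖ := by rw [norm_abs_eq_norm]

lemma smul_sup_zero [PosSMulMono ℝ E] {c : ℝ} (hc : 0 < c) (x : E) :
    (c • x) ⊔ 0 = c • (x ⊔ 0) := by
  refine le_antisymm (sup_le (smul_le_smul_of_nonneg_left le_sup_left hc.le)
    (smul_nonneg hc.le le_sup_right)) ?_
  have h : x ⊔ 0 ≤ c⁻¹ • ((c • x) ⊔ 0) := by
    refine sup_le ?_ (smul_nonneg (by positivity) le_sup_right)
    have := smul_le_smul_of_nonneg_left (a := c⁻¹) (le_sup_left : c • x ≤ (c • x) ⊔ 0)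
      (by positivity)
    rwa [smul_smul, inv_mul_cancel₀ hc.ne', one_smul] at this
  have := smul_le_smul_of_nonneg_left h hc.le
  rwa [smul_smul, mul_inv_cancel₀ hc.ne', one_smul] at this

/-- Positive norming functionals. -/
lemma exists_pos_norming [PosSMulMono ℝ E] {h : E} (hh : 0 ≤ h) :
    ∃ φ : E →L[ℝ] ℝ, (∀ x, 0 ≤ x → 0 ≤ φ x) ∧ ‖φ‖ ≤ 1 ∧ φ h = ‖h‖ := by
  by_cases h0 : h = 0
  · exact ⟨0, by simp, by simp, by simp [h0]⟩
  have hsupn : ∀ x : E, ‖x ⊔ 0‖ ≤ ‖x‖ := by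
    intro x
    rw [← norm_abs_eq_norm x]
    exact norm_le_norm_of_nonneg_le le_sup_right (sup_le (le_abs_self x) (abs_nonneg x))
  obtain ⟨g, hg1, hg2⟩ := exists_extension_of_le_sublinear
    (LinearPMap.mkSpanSingleton h ‖h‖ h0) (fun x => ‖x ⊔ 0‖)
    (by
      intro c hc x
      rw [smul_sup_zero hc, norm_smul, Real.norm_of_nonneg hc.le])
    (by
      intro x y
      refine (norm_le_norm_of_nonneg_le le_sup_right ?_).trans (norm_add_le _ _)
      exact sup_le (add_le_add le_sup_left le_sup_left) (add_nonneg le_sup_right le_sup_right))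
    (by
      rintro ⟨x, hx⟩
      obtain ⟨c, rfl⟩ := Submodule.mem_span_singleton.1 hx
      rw [LinearPMap.mkSpanSingleton'_apply]
      change c • ‖h‖ ≤ ‖(c • h) ⊔ 0‖
      rcases le_or_gt c 0 with hc | hc
      · refine le_trans ?_ (norm_nonneg _)
        simpa using mul_nonpos_of_nonpos_of_nonneg hc (norm_nonneg h)
      · rw [smul_sup_zero hc, sup_of_le_left hh, norm_smul, Real.norm_of_nonneg hc.le]
        simp)
  refine ⟨g.mkContinuous 1 fun x => ?_, fun x hx => ?_, ?_, ?_⟩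
  · rw [Real.norm_eq_abs, one_mul]
    refine abs_le'.2 ⟨(hg2 x).trans (hsupn x), ?_⟩
    rw [← map_neg]
    exact (hg2 _).trans ((hsupn _).trans (norm_neg x).le)
  · have := hg2 (-x)
    rw [sup_of_le_right (neg_nonpos.2 hx), norm_zero, map_neg] at this
    simpa using this
  · exact LinearMap.mkContinuous_norm_le _ zero_le_one _
  · have := hg1 ⟨h, Submodule.mem_span_singleton_self h⟩
    simp only [LinearPMap.mkSpanSingleton_apply] at this
    simpa using this

variable [CompleteSpace E]

/-- Neumann series: positive inverse. -/
lemma exists_pos_inverse {T : E →L[ℝ] E} (hT : OpPos T) {N : ℕ} (hN : ‖T ^ N‖ < 1) :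
    ∃ R : E →L[ℝ] E, OpPos R ∧ (1 - T) * R = 1 ∧ R * (1 - T) = 1 := by
  set M := ∑' n : ℕ, (T ^ N) ^ n with hM
  have hsum : Summable fun n : ℕ => (T ^ N) ^ n := summable_geometric_of_norm_lt_one hN
  have hMpos : OpPos M := by
    intro x hx
    have h1 : HasSum (fun n : ℕ => ((T ^ N) ^ n) x) (M x) :=
      (ContinuousLinearMap.apply ℝ E x).hasSum hsum.hasSum
    have h2 := h1.tendsto_sum_nat
    exact ge_of_tendsto' h2 fun n => Finset.sum_nonneg fun i _ => (hT.pow N).pow i x hx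
  have hM1 : M * (1 - T ^ N) = 1 := geom_series_mul_neg _ hN
  have hM2 : (1 - T ^ N) * M = 1 := mul_neg_geom_series _ hN
  have hg1 : (∑ i ∈ Finset.range N, T ^ i) * (1 - T) = 1 - T ^ N := geom_sum_mul_neg T N
  have hg2 : (1 - T) * (∑ i ∈ Finset.range N, T ^ i) = 1 - T ^ N := mul_neg_geom_sum T N
  have hr : (1 - T) * ((∑ i ∈ Finset.range N, T ^ i) * M) = 1 := by
    rw [← mul_assoc, hg2, hM2]
  have hl : (M * (∑ i ∈ Finset.range N, T ^ i)) * (1 - T) = 1 := by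
    rw [mul_assoc, hg1, hM1]
  refine ⟨(∑ i ∈ Finset.range N, T ^ i) * M, (OpPos.sum _ fun i => hT.pow i).mul hMpos, hr, ?_⟩
  rwa [← left_inv_eq_right_inv hl hr]

/-- The resolvent is large near the spectral radius. -/
lemma exists_resolvent [PosSMulMono ℝ E] {K : E →L[ℝ] E} (hK : OpPos K)
    {l : ℝ} (hl : specRad K < l) (hρ : 0 < specRad K) :
    ∃ R : E →L[ℝ] E, OpPos R ∧ (l • (1 : E →L[ℝ] E) - K) * R = 1 ∧
      R * (l • (1 : E →L[ℝ] E) - K) = 1 ∧ 1 ≤ (l - specRad K) * ‖R‖ := by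
  have hl0 : 0 < l := hρ.trans hl
  obtain ⟨N, hN, hKN⟩ := exists_norm_pow_lt K hl
  have hT : OpPos (l⁻¹ • K) := hK.smul (by positivity)
  obtain ⟨R, hR, hR1, hR2⟩ := exists_pos_inverse (N := N) hT (by
    rw [smul_pow, norm_smul, norm_pow, norm_inv, Real.norm_of_nonneg hl0.le, inv_pow,
      inv_mul_lt_iff₀ (by positivity), mul_one]
    exact hKN)
  have e : l • (1 : E →L[ℝ] E) - K = l • (1 - l⁻¹ • K) := by
    rw [smul_sub, smul_smul, mul_inv_cancel₀ hl0.ne', one_smul]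
  set Q := l⁻¹ • R with hQ
  have hQpos : OpPos Q := hR.smul (by positivity)
  have hQ1 : (l • (1 : E →L[ℝ] E) - K) * Q = 1 := by
    rw [e, hQ, smul_mul_smul_comm, mul_inv_cancel₀ hl0.ne', one_smul, hR1]
  have hQ2 : Q * (l • (1 : E →L[ℝ] E) - K) = 1 := by
    rw [e, hQ, smul_mul_smul_comm, inv_mul_cancel₀ hl0.ne', one_smul, hR2]
  refine ⟨Q, hQpos, hQ1, hQ2, ?_⟩
  by_contra hcon
  push Not at hcon
  -- choose a slightly larger step
  obtain ⟨η, hη1, hη2, hη3⟩ : ∃ η, l - specRad K < η ∧ η < l ∧ η * ‖Q‖ < 1 := by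
    have h1 : ∀ᶠ η in 𝓝[>] (l - specRad K), η * ‖Q‖ < 1 := by
      have : Tendsto (fun η => η * ‖Q‖) (𝓝[>] (l - specRad K)) (𝓝 ((l - specRad K) * ‖Q‖)) :=
        ((continuous_id.mul continuous_const).tendsto _).mono_left nhdsWithin_le_nhds
      exact this.eventually (gt_mem_nhds hcon)
    have h2 : ∀ᶠ η in 𝓝[>] (l - specRad K), η < l :=
      nhdsWithin_le_nhds (gt_mem_nhds (by linarith))
    obtain ⟨η, h⟩ := (h1.and (h2.and self_mem_nhdsWithin)).exists
    exact ⟨η, h.2.2, h.2.1, h.1⟩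
  have hη0 : 0 < η := by linarith
  obtain ⟨S, hS, hS1, hS2⟩ := exists_pos_inverse (T := η • Q) (N := 1)
    (hQpos.smul hη0.le) (by rwa [pow_one, norm_smul, Real.norm_of_nonneg hη0.le])
  -- `Q * S` inverts `(l - η) - K`
  set σ := l - η with hσ
  have hσ0 : 0 < σ := by linarith
  set V := Q * S with hV
  have hVpos : OpPos V := hQpos.mul hS
  have hV1 : (σ • (1 : E →L[ℝ] E) - K) * V = 1 := by
    have : (σ • (1 : E →L[ℝ] E) - K) * Q = 1 - η • Q := by
      have : σ • (1 : E →L[ℝ] E) - K = (l • (1 : E →L[ℝ] E) - K) - η • 1 := by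
        rw [hσ, sub_smul]; abel
      rw [this, sub_mul, hQ1, smul_mul_assoc, one_mul]
    rw [hV, ← mul_assoc, this, hS1]
  have hKV : ∀ x, σ • V x = x + K (V x) := by
    intro x
    have := congrArg (fun T : E →L[ℝ] E => T x) hV1
    simp only [ContinuousLinearMap.mul_apply, ContinuousLinearMap.sub_apply,
      ContinuousLinearMap.smul_apply, ContinuousLinearMap.one_apply] at this
    rw [← sub_eq_iff_eq_add, this]
  have hbound : ∀ n : ℕ, ∀ x, 0 ≤ x → (K ^ n) (V x) ≤ σ ^ n • V x := by
    intro n x hx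
    induction n with
    | zero => simp
    | succ n ih =>
      rw [pow_succ', ContinuousLinearMap.mul_apply]
      refine (hK.mono ih).trans ?_
      rw [map_smul, pow_succ, mul_smul]
      refine smul_le_smul_of_nonneg_left ?_ (by positivity)
      rw [hKV]
      exact le_add_of_nonneg_left hx
  have hbound2 : ∀ n : ℕ, ∀ x, 0 ≤ x → (K ^ n) x ≤ (σ ^ (n + 1) • V) x := by
    intro n x hx
    have h1 : x ≤ σ • V x := by rw [hKV]; exact le_add_of_nonneg_right (hK _ (hVpos _ hx))
    refine ((hK.pow n).mono h1).trans ?_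
    rw [map_smul, ContinuousLinearMap.smul_apply, pow_succ', mul_smul]
    exact smul_le_smul_of_nonneg_left (hbound n x hx) hσ0.le
  have : specRad K ≤ σ := by
    refine specRad_le_of_bound (M := σ * ‖V‖) K hσ0 fun n => ?_
    refine ((hK.pow n).norm_le (hbound2 n)).trans ?_
    rw [norm_smul, norm_pow, Real.norm_of_nonneg hσ0.le, pow_succ]
    exact le_of_eq (by ring)
  linarith

/-- Dual Krein-Rutman theorem for eventually compact positive operators. -/
lemma exists_dual_eigenvector [PosSMulMono ℝ E] {K : E →L[ℝ] E} (hK : OpPos K)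
    (hρ : 0 < specRad K) {i : ℕ} (hi : IsCompactOperator ⇑(K ^ i)) :
    ∃ ψ : E →L[ℝ] ℝ, (∀ x, 0 ≤ x → 0 ≤ ψ x) ∧ ψ ≠ 0 ∧ ∀ x, ψ (K x) = specRad K * ψ x := by
  set ρ := specRad K with hρdef
  -- approximate eigenfunctionals
  have step : ∀ n : ℕ, ∃ ψ : E →L[ℝ] ℝ, (∀ x, 0 ≤ x → 0 ≤ ψ x) ∧ ‖ψ‖ = 1 ∧
      ∀ x, |ψ (K x) - ρ * ψ x| ≤ 3 * (1 / ((n : ℝ) + 1)) * ‖x‖ := by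
    intro n
    set δ : ℝ := 1 / ((n : ℝ) + 1) with hδ
    have hδ0 : 0 < δ := by positivity
    obtain ⟨R, hR, hR1, hR2, hR3⟩ := exists_resolvent (l := ρ + δ) hK (by linarith) hρ
    have hRn : 1 / δ ≤ ‖R‖ := by
      rw [div_le_iff₀ hδ0]
      rw [← hρdef] at hR3
      linarith
    have hhalf : 1 / (2 * δ) < ‖R‖ := lt_of_lt_of_le
      (by apply one_div_lt_one_div_of_lt hδ0; linarith) hRn
    obtain ⟨f, hf1, hf2⟩ := R.exists_lt_apply_of_lt_opNorm hhalf
    obtain ⟨φ, hφ, hφ1, hφ2⟩ := exists_pos_norming (hR _ (abs_nonneg f))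
    set χ : E →L[ℝ] ℝ := φ.comp R with hχ
    have hχn : 1 / (2 * δ) ≤ ‖χ‖ := by
      have h1 : ‖R f‖ ≤ ‖R |f|‖ := by
        rw [← norm_abs_eq_norm (R f)]
        exact norm_le_norm_of_nonneg_le (abs_nonneg _) (hR.abs_le f)
      have h2 : χ |f| ≤ ‖χ‖ := by
        calc χ |f| ≤ ‖χ |f|‖ := Real.le_norm_self _
          _ ≤ ‖χ‖ * ‖|f|‖ := χ.le_opNorm _
          _ ≤ ‖χ‖ * 1 := by rw [norm_abs_eq_norm]; gcongr
          _ = ‖χ‖ := mul_one _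
      have h3 : χ |f| = ‖R |f|‖ := hφ2
      linarith
    have hχ0 : 0 < ‖χ‖ := lt_of_lt_of_le (by positivity) hχn
    have hinv : ‖χ‖⁻¹ ≤ 2 * δ := by
      rw [← one_div, div_le_iff₀ hχ0]
      rw [div_le_iff₀ (by positivity)] at hχn
      linarith
    have hχK : ∀ x, (ρ + δ) * χ x - χ (K x) = φ x := by
      intro x
      have := congrArg (fun T : E →L[ℝ] E => φ (T x)) hR2
      simpa [hχ, ContinuousLinearMap.mul_apply] using this
    refine ⟨‖χ‖⁻¹ • χ, fun x hx => ?_, ?_, fun x => ?_⟩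
    · exact mul_nonneg (by positivity) (hφ _ (hR _ hx))
    · rw [norm_smul, norm_inv, norm_norm, inv_mul_cancel₀ hχ0.ne']
    · have e : (‖χ‖⁻¹ • χ) (K x) - ρ * (‖χ‖⁻¹ • χ) x = ‖χ‖⁻¹ * (δ * χ x) - ‖χ‖⁻¹ * φ x := by
        simp only [ContinuousLinearMap.smul_apply, smul_eq_mul]
        rw [← hχK x]; ring
      rw [e]
      have a1 : |‖χ‖⁻¹ * (δ * χ x)| ≤ δ * ‖x‖ := by
        rw [abs_mul, abs_mul, abs_of_pos hδ0, abs_of_pos (inv_pos.2 hχ0),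
          inv_mul_le_iff₀ hχ0]
        have := χ.le_opNorm x
        rw [Real.norm_eq_abs] at this
        nlinarith
      have a2 : |‖χ‖⁻¹ * φ x| ≤ 2 * δ * ‖x‖ := by
        rw [abs_mul, abs_of_pos (inv_pos.2 hχ0)]
        have := φ.le_of_opNorm_le hφ1 x
        rw [Real.norm_eq_abs, one_mul] at this
        gcongr
      have := abs_sub (‖χ‖⁻¹ * (δ * χ x)) (‖χ‖⁻¹ * φ x)
      linarith
  choose ψ hψpos hψ1 hψK using step
  have hpow : ∀ j : ℕ, ∃ C : ℝ, ∀ n : ℕ, ∀ x,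
      |ψ n ((K ^ j) x) - ρ ^ j * ψ n x| ≤ C * (1 / ((n : ℝ) + 1)) * ‖x‖ := by
    intro j
    induction j with
    | zero => exact ⟨0, by simp⟩
    | succ j ih =>
      obtain ⟨C, hC⟩ := ih
      refine ⟨|C| * ‖K‖ + ρ ^ j * 3, fun n x => ?_⟩
      have h1 := hC n (K x)
      have h2 := hψK n x
      have h3 : ‖K x‖ ≤ ‖K‖ * ‖x‖ := K.le_opNorm x
      rw [pow_succ, ContinuousLinearMap.mul_apply]
      have e : ψ n ((K ^ j) (K x)) - ρ ^ (j + 1) * ψ n x =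
        (ψ n ((K ^ j) (K x)) - ρ ^ j * ψ n (K x)) + ρ ^ j * (ψ n (K x) - ρ * ψ n x) := by ring
      rw [e]
      refine (abs_add_le _ _).trans ?_
      have h4 : |ρ ^ j * (ψ n (K x) - ρ * ψ n x)| ≤ ρ ^ j * (3 * (1 / ((n : ℝ) + 1)) * ‖x‖) := by
        rw [abs_mul, abs_of_pos (pow_pos hρ j)]
        gcongr
      have h5 : C * (1 / ((n : ℝ) + 1)) * ‖K x‖ ≤ |C| * (1 / ((n : ℝ) + 1)) * (‖K‖ * ‖x‖) := by
        gcongr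
        exact le_abs_self C
      calc _ ≤ |C| * (1 / ((n : ℝ) + 1)) * (‖K‖ * ‖x‖) + ρ ^ j * (3 * (1 / ((n : ℝ) + 1)) * ‖x‖) :=
            add_le_add (h1.trans h5) h4
        _ = _ := by ring
  have hn0 : Tendsto (fun n : ℕ => 1 / ((n : ℝ) + 1)) (hyperfilter ℕ : Filter ℕ) (𝓝 0) :=
    tendsto_one_div_add_atTop_nhds_zero_nat.mono_left (Nat.hyperfilter_le_atTop)
  -- weak-* limit
  obtain ⟨ψ', -, hψ'⟩ : ∃ ψ' ∈ (WeakDual.toStrongDual ⁻¹' Metric.closedBall (0 : StrongDual ℝ E) 1 :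
      Set (WeakDual ℝ E)), Tendsto (fun n => StrongDual.toWeakDual (ψ n)) (hyperfilter ℕ : Filter ℕ) (𝓝 ψ') := by
    have hc := WeakDual.isCompact_closedBall (𝕜 := ℝ) (E := E) 0 1
    have := isCompact_iff_ultrafilter_le_nhds.1 hc
      ((hyperfilter ℕ).map fun n => StrongDual.toWeakDual (ψ n)) (by
        rw [le_principal_iff]
        refine mem_map.2 (univ_mem' fun n => ?_)
        simp [hψ1 n])
    exact this
  have hev : ∀ x, Tendsto (fun n => ψ n x) (hyperfilter ℕ : Filter ℕ) (𝓝 (ψ' x)) :=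
    fun x => (WeakDual.eval_continuous x).continuousAt.tendsto.comp hψ'
  let Ψ : E →L[ℝ] ℝ := WeakDual.toStrongDual ψ'
  have hev' : ∀ x, Tendsto (fun n => ψ n x) (hyperfilter ℕ : Filter ℕ) (𝓝 (Ψ x)) := hev
  refine ⟨Ψ, fun x hx => ge_of_tendsto' (hev' x) fun n => hψpos n x hx, ?_, fun x => ?_⟩
  · -- nonzero
    have hx : ∀ n, ∃ x : E, ‖x‖ < 1 ∧ 1 / 2 < |ψ n x| := by
      intro n
      obtain ⟨x, h1, h2⟩ := (ψ n).exists_lt_apply_of_lt_opNorm (r := 1 / 2) (by rw [hψ1]; norm_num)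
      exact ⟨x, h1, by rwa [Real.norm_eq_abs] at h2⟩
    choose x hx1 hx2 using hx
    obtain ⟨S, hS, hSsub⟩ := hi.image_closedBall_subset_compact (f := ((K ^ i : E →L[ℝ] E) : E →ₗ[ℝ] E)) 1
    obtain ⟨v, -, hv⟩ : ∃ v ∈ S, Tendsto (fun n => (K ^ i) (x n)) (hyperfilter ℕ : Filter ℕ) (𝓝 v) :=
      isCompact_iff_ultrafilter_le_nhds.1 hS ((hyperfilter ℕ).map fun n => (K ^ i) (x n)) (by
        rw [le_principal_iff]
        refine mem_map.2 (univ_mem' fun n => hSsub ⟨x n, ?_, rfl⟩)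
        simpa using (hx1 n).le)
    obtain ⟨C, hC⟩ := hpow i
    have hlow : ∀ n : ℕ, ρ ^ i * (1 / 2) - |C| * (1 / ((n : ℝ) + 1)) - ‖(K ^ i) (x n) - v‖ ≤ |ψ n v| := by
      intro n
      have h1 := hC n (x n)
      have h2 : |ψ n ((K ^ i) (x n) - v)| ≤ ‖(K ^ i) (x n) - v‖ := by
        have := (ψ n).le_opNorm ((K ^ i) (x n) - v)
        rwa [hψ1, one_mul, Real.norm_eq_abs] at this
      rw [map_sub] at h2
      have h3 : C * (1 / ((n : ℝ) + 1)) * ‖x n‖ ≤ |C| * (1 / ((n : ℝ) + 1)) := by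
        calc _ ≤ |C| * (1 / ((n : ℝ) + 1)) * 1 := by
              gcongr
              · exact le_abs_self C
              · exact (hx1 n).le
          _ = _ := mul_one _
      have h4 : ρ ^ i * (1 / 2) ≤ |ρ ^ i * ψ n (x n)| := by
        rw [abs_mul, abs_of_pos (pow_pos hρ i)]
        have := (hx2 n).le
        gcongr
      have h5 := abs_sub_abs_le_abs_sub (ρ ^ i * ψ n (x n)) (ψ n v)
      have h6 : |ρ ^ i * ψ n (x n) - ψ n v| ≤ |ψ n ((K ^ i) (x n)) - ρ ^ i * ψ n (x n)| +
          |ψ n ((K ^ i) (x n)) - ψ n v| := by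
        rw [abs_sub_comm (ψ n ((K ^ i) (x n)))]
        exact abs_sub_le _ _ _
      linarith
    have hlim : Tendsto (fun n : ℕ => ρ ^ i * (1 / 2) - |C| * (1 / ((n : ℝ) + 1)) -
        ‖(K ^ i) (x n) - v‖) (hyperfilter ℕ : Filter ℕ) (𝓝 (ρ ^ i * (1 / 2) - |C| * 0 - 0)) := by
      refine (tendsto_const_nhds.sub (hn0.const_mul _)).sub ?_
      exact tendsto_iff_norm_sub_tendsto_zero.1 hv
    have hge := le_of_tendsto_of_tendsto' hlim (hev' v).abs hlow
    intro h0
    rw [h0] at hge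
    have := pow_pos hρ i
    simp at hge
    linarith
  · have h1 : Tendsto (fun n => |ψ n (K x) - ρ * ψ n x|) (hyperfilter ℕ : Filter ℕ)
        (𝓝 |Ψ (K x) - ρ * Ψ x|) := ((hev' (K x)).sub ((hev' x).const_mul ρ)).abs
    have h2 : Tendsto (fun n : ℕ => 3 * (1 / ((n : ℝ) + 1)) * ‖x‖) (hyperfilter ℕ : Filter ℕ)
        (𝓝 (3 * 0 * ‖x‖)) := (hn0.const_mul 3).mul_const _
    have h3 := le_of_tendsto_of_tendsto' h1 h2 fun n => hψK n x
    rw [mul_zero, zero_mul] at h3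
    exact sub_eq_zero.1 (abs_eq_zero.1 (le_antisymm h3 (abs_nonneg _)))

end BanachLattice


section LpTools

variable {X : Type*} [MeasurableSpace X] {π : Measure X} {p : ℝ≥0∞} [Fact (1 ≤ p)]

instance lpPosSMulMono : PosSMulMono ℝ (Lp ℝ p π) where
  smul_le_smul_of_nonneg_left := by
    intro a ha f g hfg
    rw [← Lp.coeFn_le] at hfg ⊢
    filter_upwards [hfg, Lp.coeFn_smul a f, Lp.coeFn_smul a g] with x h1 h2 h3
    rw [h2, h3]
    exact mul_le_mul_of_nonneg_left h1 ha

lemma lp_dominated [IsFiniteMeasure π] (hp : p ≠ ⊤) {f : ℕ → Lp ℝ p π} {g F : Lp ℝ p π}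
    (hb : ∀ n, |f n| ≤ F) (hlim : ∀ᵐ x ∂π, Tendsto (fun n => f n x) atTop (𝓝 (g x))) :
    Tendsto f atTop (𝓝 g) := by
  rw [Lp.tendsto_Lp_iff_tendsto_eLpNorm']
  refine tendsto_Lp_finite_of_tendsto_ae Fact.out hp (fun n => Lp.aestronglyMeasurable _)
    (Lp.memLp g) ?_ hlim
  have hF : UnifIntegrable (fun _ : ℕ => (F : X → ℝ)) p π :=
    unifIntegrable_const Fact.out hp (Lp.memLp F)
  intro ε hε
  obtain ⟨δ, hδ, h⟩ := hF hε
  refine ⟨δ, hδ, fun n s hs hsδ => le_trans (eLpNorm_mono_ae ?_) (h n s hs hsδ)⟩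
  have hbn := (Lp.coeFn_le _ _).2 (hb n)
  filter_upwards [hbn, Lp.coeFn_abs (f n)] with x h1 h2
  rw [h2] at h1
  by_cases hx : x ∈ s
  · simp only [Set.indicator_of_mem hx, Real.norm_eq_abs]
    exact h1.trans (le_abs_self _)
  · simp [Set.indicator_of_notMem hx]

lemma lp_exists_limit [IsFiniteMeasure π] (hp : p ≠ ⊤) {f : ℕ → Lp ℝ p π} {F : Lp ℝ p π}
    {g : X → ℝ}
    (hb : ∀ n, |f n| ≤ F) (hlim : ∀ᵐ x ∂π, Tendsto (fun n => f n x) atTop (𝓝 (g x))) :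
    ∃ G : Lp ℝ p π, Tendsto f atTop (𝓝 G) := by
  have hgm : AEStronglyMeasurable g π :=
    aestronglyMeasurable_of_tendsto_ae atTop (fun n => Lp.aestronglyMeasurable (f n)) hlim
  have hbd : ∀ᵐ x ∂π, ‖g x‖ ≤ F x := by
    have h : ∀ᵐ x ∂π, ∀ n, |f n x| ≤ F x := by
      rw [ae_all_iff]
      intro n
      filter_upwards [(Lp.coeFn_le _ _).2 (hb n), Lp.coeFn_abs (f n)] with x h1 h2
      rwa [h2] at h1
    filter_upwards [h, hlim] with x h1 h2
    exact le_of_tendsto' h2.abs h1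
  have hgL : MemLp g p π := (Lp.memLp F).mono' hgm hbd
  refine ⟨hgL.toLp g, lp_dominated hp hb ?_⟩
  filter_upwards [hlim, hgL.coeFn_toLp] with x h1 h2
  rwa [h2]

lemma lp_monotone_limit [IsFiniteMeasure π] (hp : p ≠ ⊤) {f : ℕ → Lp ℝ p π} {u : Lp ℝ p π}
    (hm : Monotone f) (h0 : ∀ n, 0 ≤ f n) (hu : ∀ n, f n ≤ u) :
    ∃ G : Lp ℝ p π, Tendsto f atTop (𝓝 G) := by
  refine lp_exists_limit (F := u) (g := fun x => ⨆ n, f n x) hp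
    (fun n => by rw [abs_of_nonneg (h0 n)]; exact hu n) ?_
  have h1 : ∀ᵐ x ∂π, ∀ n, f n x ≤ f (n + 1) x :=
    ae_all_iff.2 fun n => (Lp.coeFn_le _ _).2 (hm n.le_succ)
  have h2 : ∀ᵐ x ∂π, ∀ n, f n x ≤ u x := ae_all_iff.2 fun n => (Lp.coeFn_le _ _).2 (hu n)
  filter_upwards [h1, h2] with x h1 h2
  exact tendsto_atTop_ciSup (monotone_nat_of_le_succ h1) ⟨u x, by rintro _ ⟨n, rfl⟩; exact h2 n⟩

lemma lp_antitone_limit [IsFiniteMeasure π] (hp : p ≠ ⊤) {f : ℕ → Lp ℝ p π}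
    (hm : Antitone f) (h0 : ∀ n, 0 ≤ f n) :
    ∃ G : Lp ℝ p π, Tendsto f atTop (𝓝 G) := by
  obtain ⟨G, hG⟩ := lp_monotone_limit (f := fun n => f 0 - f n) (u := f 0) hp
    (fun a b hab => sub_le_sub_left (hm hab) _) (fun n => sub_nonneg.2 (hm (Nat.zero_le n)))
    (fun n => sub_le_self _ (h0 n))
  refine ⟨f 0 - G, ?_⟩
  have := hG.const_sub (f 0)
  simpa using this

/-- Subsequence converging almost everywhere. -/
lemma lp_exists_subseq_ae {f : ℕ → Lp ℝ p π} {g : Lp ℝ p π} (h : Tendsto f atTop (𝓝 g)) :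
    ∃ ns : ℕ → ℕ, StrictMono ns ∧ ∀ᵐ x ∂π, Tendsto (fun i => f (ns i) x) atTop (𝓝 (g x)) :=
  (tendstoInMeasure_of_tendsto_Lp h).exists_seq_tendsto_ae

lemma lp_pos_of_pos {f : Lp ℝ p π} (h : ∀ᵐ x ∂π, 0 < f x) : 0 ≤ f :=
  (Lp.coeFn_nonneg f).1 (h.mono fun _ hx => hx.le)

lemma lp_ne_zero_of_pos [NeZero π] {f : Lp ℝ p π} (h : ∀ᵐ x ∂π, 0 < f x) : f ≠ 0 := by
  rintro rfl
  obtain ⟨x, h1, h2⟩ := (h.and (Lp.coeFn_zero ℝ p π)).exists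
  rw [h2] at h1
  exact lt_irrefl _ h1

lemma le_specRad_of_le {K : Lp ℝ p π →L[ℝ] Lp ℝ p π} (hK : OpPos K) {f : Lp ℝ p π}
    (hf : 0 ≤ f) (hf0 : f ≠ 0) {m : ℝ} (hm : 0 ≤ m) (h : m • f ≤ K f) : m ≤ specRad K := by
  refine le_specRad K hm fun n => ?_
  have hn : m ^ n • f ≤ (K ^ n) f := by
    induction n with
    | zero => simp
    | succ n ih =>
      rw [pow_succ, pow_succ, ContinuousLinearMap.mul_apply, mul_smul]
      calc m ^ n • m • f = m • m ^ n • f := smul_comm _ _ _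
        _ ≤ m • (K ^ n) f := smul_le_smul_of_nonneg_left ih hm
        _ = (K ^ n) (m • f) := by rw [map_smul]
        _ ≤ (K ^ n) (K f) := (hK.pow n).mono h
  have h1 := norm_le_norm_of_nonneg_le (smul_nonneg (pow_nonneg hm n) hf) hn
  rw [norm_smul, norm_pow, Real.norm_of_nonneg hm] at h1
  have h2 := (K ^ n).le_opNorm f
  exact le_of_mul_le_mul_right (h1.trans h2) (norm_pos_iff.2 hf0)

/-- A dual eigenvector is strictly positive. -/
lemma dual_strictly_pos [IsFiniteMeasure π] (hp : p ≠ ⊤) {K : Lp ℝ p π →L[ℝ] Lp ℝ p π}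
    (hKs : ∀ f, 0 ≤ f → f ≠ 0 → ∀ᵐ x ∂π, 0 < K f x)
    {ψ : Lp ℝ p π →L[ℝ] ℝ} {ρ : ℝ} (hρ : 0 < ρ) (hψ : ∀ x, 0 ≤ x → 0 ≤ ψ x) (hψ0 : ψ ≠ 0)
    (hψK : ∀ x, ψ (K x) = ρ * ψ x) {f : Lp ℝ p π} (hf : 0 ≤ f) (hf0 : f ≠ 0) : 0 < ψ f := by
  obtain ⟨f₀, hf₀, hψf₀⟩ : ∃ f₀, 0 ≤ f₀ ∧ 0 < ψ f₀ := by
    by_contra hcon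
    push Not at hcon
    apply hψ0
    ext x
    have hz : ∀ y, 0 ≤ y → ψ y = 0 := fun y hy => le_antisymm (hcon y hy) (hψ y hy)
    have h1 := hz _ (abs_nonneg x)
    have h2 := hz (|x| - x) (sub_nonneg.2 (le_abs_self x))
    rw [map_sub, h1] at h2
    simp only [ContinuousLinearMap.zero_apply]
    linarith
  set w := K f with hw
  have hwpos := hKs f hf hf0
  have hw0 : 0 ≤ w := lp_pos_of_pos hwpos
  have hlim : Tendsto (fun n : ℕ => f₀ ⊓ ((n : ℝ) • w)) atTop (𝓝 f₀) := by
    refine lp_dominated (F := f₀) hp (fun n => ?_) ?_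
    · rw [abs_of_nonneg (le_inf hf₀ (smul_nonneg (Nat.cast_nonneg n) hw0))]
      exact inf_le_left
    · have h1 : ∀ᵐ x ∂π, ∀ n : ℕ, (f₀ ⊓ ((n : ℝ) • w)) x = min (f₀ x) (n * w x) := by
        rw [ae_all_iff]
        intro n
        filter_upwards [Lp.coeFn_inf f₀ ((n : ℝ) • w), Lp.coeFn_smul (n : ℝ) w] with x h1 h2
        rw [h1, Pi.inf_apply, h2]
        rfl
      filter_upwards [h1, hwpos] with x h1 h2
      refine tendsto_const_nhds.congr' ?_
      have : Tendsto (fun n : ℕ => (n : ℝ) * w x) atTop atTop :=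
        tendsto_natCast_atTop_atTop.atTop_mul_const h2
      filter_upwards [this.eventually_ge_atTop (f₀ x)] with n hn
      rw [h1, min_eq_left hn]
  have h2 := (ψ.continuous.tendsto f₀).comp hlim
  obtain ⟨n, hn⟩ := (h2.eventually (lt_mem_nhds hψf₀)).exists
  have h3 : ψ (f₀ ⊓ ((n : ℝ) • w)) ≤ ψ ((n : ℝ) • w) := by
    have := hψ _ (sub_nonneg.2 (inf_le_right : f₀ ⊓ ((n : ℝ) • w) ≤ (n : ℝ) • w))
    rwa [map_sub, sub_nonneg] at this
  have h4 : 0 < (n : ℝ) * (ρ * ψ f) := by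
    rw [← hψK f, ← smul_eq_mul, ← map_smul]
    exact lt_of_lt_of_le hn h3
  have h5 : 0 < ρ * ψ f := pos_of_mul_pos_right h4 (Nat.cast_nonneg n)
  exact pos_of_mul_pos_right h5 hρ.le

end LpTools

section Kernel

variable {X : Type*} [MetricSpace X] [SigmaCompactSpace X] [MeasurableSpace X] [BorelSpace X]
    {μ π : Measure X} [SigmaFinite μ] [IsProbabilityMeasure π]
    {d : X → ℝ} {p : ℝ≥0∞} [Fact (1 ≤ p)] {k : X → X → ℝ}
    {K : Lp ℝ p π →L[ℝ] Lp ℝ p π}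

lemma mu_finite_compacts (hd_cont : Continuous d) (hd_pos : ∀ x, 0 < d x)
    (hπ : π = μ.withDensity (fun x => ENNReal.ofReal (d x))) {S : Set X} (hS : IsCompact S) :
    μ S < ⊤ := by
  rcases S.eq_empty_or_nonempty with rfl | hne
  · simp
  obtain ⟨x₀, hx₀, hmin⟩ := hS.exists_isMinOn hne hd_cont.continuousOn
  have h1 : ENNReal.ofReal (d x₀) * μ S ≤ π S := by
    rw [hπ, withDensity_apply _ hS.measurableSet, ← setLIntegral_const]
    exact setLIntegral_mono' hS.measurableSet fun x hx => ENNReal.ofReal_le_ofReal (hmin hx)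
  have h2 : ENNReal.ofReal (d x₀) * μ S < ⊤ := h1.trans_lt (measure_lt_top π S)
  by_contra hcon
  rw [not_lt, top_le_iff] at hcon
  rw [hcon, ENNReal.mul_top (by simpa using hd_pos x₀)] at h2
  exact lt_irrefl _ h2

lemma mu_ac_pi (hd_cont : Continuous d) (hd_pos : ∀ x, 0 < d x)
    (hπ : π = μ.withDensity (fun x => ENNReal.ofReal (d x))) : μ ≪ π := by
  rw [hπ]
  refine withDensity_absolutelyContinuous' (by fun_prop) ?_
  exact Eventually.of_forall fun x => by simpa using hd_pos x

lemma kernel_opPos (hk_pos : ∀ x y, 0 < k x y) (hd_cont : Continuous d) (hd_pos : ∀ x, 0 < d x)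
    (hπ : π = μ.withDensity (fun x => ENNReal.ofReal (d x)))
    (hK : ∀ g : Lp ℝ p π, (K g : X → ℝ) =ᵐ[π] fun x => ∫ y, k x y * g y ∂μ) : OpPos K := by
  intro f hf
  rw [← Lp.coeFn_nonneg]
  have hf' : ∀ᵐ y ∂μ, 0 ≤ f y := (mu_ac_pi hd_cont hd_pos hπ).ae_le ((Lp.coeFn_nonneg f).2 hf)
  filter_upwards [hK f] with x hx
  rw [hx]
  exact integral_nonneg_of_ae (hf'.mono fun y hy => mul_nonneg (hk_pos x y).le hy)

lemma kernel_indicator (hd_cont : Continuous d) (hd_pos : ∀ x, 0 < d x)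
    (hπ : π = μ.withDensity (fun x => ENNReal.ofReal (d x)))
    (hK : ∀ g : Lp ℝ p π, (K g : X → ℝ) =ᵐ[π] fun x => ∫ y, k x y * g y ∂μ)
    {B : Set X} (hB : MeasurableSet B) :
    (K (indicatorConstLp p hB (measure_ne_top π B) (1 : ℝ)) : X → ℝ) =ᵐ[π]
      fun x => ∫ y in B, k x y ∂μ := by
  have h1 := (mu_ac_pi hd_cont hd_pos hπ).ae_le
    (indicatorConstLp_coeFn (p := p) (hs := hB) (hμs := measure_ne_top π B) (c := (1 : ℝ)))
  filter_upwards [hK (indicatorConstLp p hB (measure_ne_top π B) (1 : ℝ))] with x hx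
  rw [hx, ← integral_indicator hB]
  refine integral_congr_ae ?_
  filter_upwards [h1] with y hy
  rw [hy]
  by_cases hyB : y ∈ B <;> simp [hyB]

lemma kernel_integrableOn (hk_cont : Continuous (Function.uncurry k)) (hd_cont : Continuous d)
    (hd_pos : ∀ x, 0 < d x)
    (hπ : π = μ.withDensity (fun x => ENNReal.ofReal (d x))) {S : Set X} (hS : IsCompact S) (x : X) :
    IntegrableOn (fun y => k x y) S μ := by
  have : IsFiniteMeasureOnCompacts μ := ⟨fun S hS => mu_finite_compacts hd_cont hd_pos hπ hS⟩
  have hc : Continuous fun y => k x y := hk_cont.comp (Continuous.prodMk_right x)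
  exact hc.continuousOn.integrableOn_compact hS

lemma kernel_strict (hk_cont : Continuous (Function.uncurry k)) (hk_pos : ∀ x y, 0 < k x y)
    (hd_cont : Continuous d) (hd_pos : ∀ x, 0 < d x)
    (hπ : π = μ.withDensity (fun x => ENNReal.ofReal (d x)))
    (hK : ∀ g : Lp ℝ p π, (K g : X → ℝ) =ᵐ[π] fun x => ∫ y, k x y * g y ∂μ)
    (f : Lp ℝ p π) (hf : 0 ≤ f) (hf0 : f ≠ 0) : ∀ᵐ x ∂π, 0 < K f x := by
  have hfm : Measurable (f : X → ℝ) := (Lp.stronglyMeasurable f).measurable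
  -- find a set on which `f` is bounded below
  obtain ⟨n, hn⟩ : ∃ n : ℕ, 0 < π ({x | 1 / ((n : ℝ) + 1) < f x} ∩ compactCovering X n) := by
    by_contra hcon
    push Not at hcon
    apply hf0
    have hz : π (⋃ n : ℕ, {x | 1 / ((n : ℝ) + 1) < f x} ∩ compactCovering X n) = 0 :=
      measure_iUnion_null fun n => le_antisymm (hcon n) zero_le
    rw [Lp.eq_zero_iff_ae_eq_zero]
    have hz' : ∀ᵐ x ∂π, x ∉ ⋃ n : ℕ, {x | 1 / ((n : ℝ) + 1) < f x} ∩ compactCovering X n :=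
      measure_eq_zero_iff_ae_notMem.1 hz
    filter_upwards [hz', (Lp.coeFn_nonneg f).2 hf] with x hx1 hx2
    by_contra hne
    apply hx1
    have hpos : 0 < f x := lt_of_le_of_ne hx2 (Ne.symm hne)
    obtain ⟨a, ha⟩ := exists_nat_one_div_lt hpos
    obtain ⟨b, hb⟩ := exists_mem_compactCovering x
    refine Set.mem_iUnion.2 ⟨max a b, ?_, compactCovering_subset X (le_max_right a b) hb⟩
    refine lt_of_le_of_lt ?_ ha
    apply one_div_le_one_div_of_le (by positivity)
    have : (a : ℝ) ≤ ((max a b : ℕ) : ℝ) := by exact_mod_cast le_max_left a b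
    linarith
  set B := {x | 1 / ((n : ℝ) + 1) < f x} ∩ compactCovering X n with hBdef
  have hBm : MeasurableSet B := (measurableSet_lt measurable_const hfm).inter
    (isCompact_compactCovering X n).measurableSet
  have hμB : 0 < μ B := by
    rcases eq_or_ne (μ B) 0 with h | h
    · have hac : π ≪ μ := by rw [hπ]; exact withDensity_absolutelyContinuous _ _
      rw [hac h] at hn
      exact absurd hn (lt_irrefl _)
    · exact pos_iff_ne_zero.2 h
  set δ : ℝ := 1 / ((n : ℝ) + 1) with hδ
  have hδ0 : 0 < δ := by positivity
  have hle : δ • indicatorConstLp p hBm (measure_ne_top π B) (1 : ℝ) ≤ f := by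
    rw [← Lp.coeFn_le]
    filter_upwards [Lp.coeFn_smul δ (indicatorConstLp p hBm (measure_ne_top π B) (1 : ℝ)),
      indicatorConstLp_coeFn (p := p) (hs := hBm) (hμs := measure_ne_top π B) (c := (1 : ℝ)),
      (Lp.coeFn_nonneg f).2 hf] with x h1 h2 h3
    rw [h1, Pi.smul_apply, h2]
    by_cases hx : x ∈ B
    · simpa [hx] using hx.1.le
    · simpa [hx] using h3
  have hKle := (kernel_opPos hk_pos hd_cont hd_pos hπ hK).mono hle
  rw [map_smul, ← Lp.coeFn_le] at hKle
  filter_upwards [hKle, kernel_indicator hd_cont hd_pos hπ hK hBm,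
    Lp.coeFn_smul δ (K (indicatorConstLp p hBm (measure_ne_top π B) (1 : ℝ)))] with x h1 h2 h3
  refine lt_of_lt_of_le ?_ h1
  rw [h3, Pi.smul_apply, h2, smul_eq_mul]
  refine mul_pos hδ0 ?_
  rw [setIntegral_pos_iff_support_of_nonneg_ae]
  · have : Function.support (fun y => k x y) = Set.univ :=
      Set.eq_univ_of_forall fun y => (hk_pos x y).ne'
    rwa [this, Set.univ_inter]
  · exact Eventually.of_forall fun y => (hk_pos x y).le
  · exact (kernel_integrableOn hk_cont hd_cont hd_pos hπ
      (isCompact_compactCovering X n) x).mono_set Set.inter_subset_right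

lemma kernel_specRad_pos (hk_cont : Continuous (Function.uncurry k)) (hk_pos : ∀ x y, 0 < k x y)
    (hd_cont : Continuous d) (hd_pos : ∀ x, 0 < d x)
    (hπ : π = μ.withDensity (fun x => ENNReal.ofReal (d x)))
    (hK : ∀ g : Lp ℝ p π, (K g : X → ℝ) =ᵐ[π] fun x => ∫ y, k x y * g y ∂μ) :
    0 < specRad K := by
  obtain ⟨n, hn⟩ : ∃ n : ℕ, 0 < π (compactCovering X n) := by
    by_contra hcon
    push Not at hcon
    have hz : π (⋃ n : ℕ, compactCovering X n) = 0 :=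
      measure_iUnion_null fun n => le_antisymm (hcon n) zero_le
    rw [iUnion_compactCovering, measure_univ] at hz
    exact one_ne_zero hz
  set S := compactCovering X n with hSdef
  have hS : IsCompact S := isCompact_compactCovering X n
  have hSm := hS.measurableSet
  have hne : S.Nonempty := nonempty_of_measure_ne_zero hn.ne'
  obtain ⟨z, hz, hmin⟩ := (hS.prod hS).exists_isMinOn (hne.prod hne) hk_cont.continuousOn
  have hμS : 0 < μ S := by
    rcases eq_or_ne (μ S) 0 with h | h
    · have hac : π ≪ μ := by rw [hπ]; exact withDensity_absolutelyContinuous _ _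
      rw [hac h] at hn
      exact absurd hn (lt_irrefl _)
    · exact pos_iff_ne_zero.2 h
  have hμS' := mu_finite_compacts hd_cont hd_pos hπ hS
  set κ := Function.uncurry k z with hκ
  have hκ0 : 0 < κ := hk_pos _ _
  have hm : 0 < μ.real S := ENNReal.toReal_pos hμS.ne' hμS'.ne
  have hpos := kernel_opPos hk_pos hd_cont hd_pos hπ hK
  set f : Lp ℝ p π := indicatorConstLp p hSm (measure_ne_top π S) (1 : ℝ) with hf
  have hfc := indicatorConstLp_coeFn (p := p) (hs := hSm) (hμs := measure_ne_top π S) (c := (1 : ℝ))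
  have hf0 : 0 ≤ f := by
    rw [← Lp.coeFn_nonneg]
    filter_upwards [hfc] with x hx
    rw [hx]
    exact Set.indicator_nonneg (fun _ _ => zero_le_one) x
  have hfne : f ≠ 0 := by
    intro h
    rw [Lp.eq_zero_iff_ae_eq_zero] at h
    have : ∀ᵐ x ∂π, x ∉ S := by
      filter_upwards [h, hfc] with x h1 h2 hxS
      rw [← hf, h1] at h2
      simp [hxS] at h2
    rw [measure_eq_zero_iff_ae_notMem.2 this] at hn
    exact lt_irrefl _ hn
  refine lt_of_lt_of_le (mul_pos hκ0 hm) (le_specRad_of_le hpos hf0 hfne (mul_pos hκ0 hm).le ?_)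
  rw [← Lp.coeFn_le]
  filter_upwards [Lp.coeFn_smul (κ * μ.real S) f, hfc, kernel_indicator hd_cont hd_pos hπ hK hSm]
    with x h1 h2 h3
  rw [h1, Pi.smul_apply, hf, h2, h3]
  by_cases hx : x ∈ S
  · have h4 : ∫ y in S, κ ∂μ ≤ ∫ y in S, k x y ∂μ := by
      refine setIntegral_mono_on ?_ (kernel_integrableOn hk_cont hd_cont hd_pos hπ hS x) hSm
        fun y hy => hmin (Set.mk_mem_prod hx hy)
      exact integrableOn_const hμS'.ne
    rw [setIntegral_const, smul_eq_mul] at h4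
    simp only [hx, Set.indicator_of_mem, smul_eq_mul, mul_one]
    linarith
  · simp only [hx, not_false_eq_true, Set.indicator_of_notMem, smul_zero]
    exact integral_nonneg fun y => (hk_pos x y).le

end Kernel


section Scalar

/-- The scalar aggregator. -/
noncomputable def agg (β θ z t : ℝ) : ℝ := (z + β * t ^ (1 / θ)) ^ θ

variable {β θ z t : ℝ}

lemma agg_pos (hβ : 0 < β) (hz : 0 < z) (ht : 0 < t) : 0 < agg β θ z t := by
  unfold agg; positivity

lemma agg_mono (hβ : 0 < β) (hz : 0 < z) {s : ℝ} (hs : 0 < s) (hst : s ≤ t) :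
    agg β θ z s ≤ agg β θ z t := by
  unfold agg
  have ht := hs.trans_le hst
  rcases le_total 0 θ with h | h
  · have : 0 ≤ 1 / θ := by positivity
    gcongr
  · have h1 : 1 / θ ≤ 0 := by rw [one_div]; exact inv_nonpos.2 h
    refine Real.rpow_le_rpow_of_nonpos (by positivity) ?_ h
    have := Real.rpow_le_rpow_of_nonpos hs hst h1
    gcongr

lemma agg_tendsto (hβ : 0 < β) (hz : 0 < z) (ht : 0 < t) {ι : Type*} {l : Filter ι} {f : ι → ℝ}
    (hf : Tendsto f l (𝓝 t)) : Tendsto (fun i => agg β θ z (f i)) l (𝓝 (agg β θ z t)) := by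
  unfold agg
  have h1 : 0 < z + β * t ^ (1 / θ) := by positivity
  exact ((tendsto_const_nhds.add ((hf.rpow_const (Or.inl ht.ne')).const_mul β))).rpow_const
    (Or.inl h1.ne')

lemma agg_aux (hθ : θ ≠ 0) (hβ : 0 < β) (ht : 0 < t) :
    (β * t ^ (1 / θ)) ^ θ = β ^ θ * t := by
  rw [Real.mul_rpow hβ.le (by positivity), ← Real.rpow_mul ht.le, one_div_mul_cancel hθ,
    Real.rpow_one]

lemma lt_agg (hθ : 0 < θ) (hβ : 0 < β) (hz : 0 < z) (ht : 0 < t) :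
    β ^ θ * t < agg β θ z t := by
  rw [← agg_aux hθ.ne' hβ ht]
  unfold agg
  exact Real.rpow_lt_rpow (by positivity) (by linarith) hθ

lemma agg_lt (hθ : θ < 0) (hβ : 0 < β) (hz : 0 < z) (ht : 0 < t) :
    agg β θ z t < β ^ θ * t := by
  rw [← agg_aux hθ.ne hβ ht]
  unfold agg
  exact Real.rpow_lt_rpow_of_neg (by positivity) (by linarith) hθ

lemma agg_le_const (hθ : θ < 0) (hβ : 0 < β) {z₀ : ℝ} (hz₀ : 0 < z₀) (hz : z₀ ≤ z) (ht : 0 < t) :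
    agg β θ z t ≤ z₀ ^ θ := by
  unfold agg
  have : 0 < t ^ (1 / θ) := by positivity
  exact Real.rpow_le_rpow_of_nonpos hz₀ (by nlinarith) hθ.le

lemma const_le_agg (hθ : 0 < θ) (hβ : 0 < β) {z₀ : ℝ} (hz₀ : 0 < z₀) (hz : z₀ ≤ z) (ht : 0 < t) :
    z₀ ^ θ ≤ agg β θ z t := by
  unfold agg
  have : 0 < t ^ (1 / θ) := by positivity
  exact Real.rpow_le_rpow hz₀.le (by nlinarith) hθ.le

lemma agg_div_tendsto (hθ : θ < 0) (hβ : 0 < β) (hz : 0 < z) {f : ℕ → ℝ} (hf0 : ∀ n, 0 < f n)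
    (hf : Tendsto f atTop (𝓝 0)) :
    Tendsto (fun n => β ^ θ - agg β θ z (f n) / f n) atTop (𝓝 0) := by
  have e : ∀ n, agg β θ z (f n) / f n = (z * f n ^ (-(1 / θ)) + β) ^ θ := by
    intro n
    have h := hf0 n
    have h1 : z + β * f n ^ (1 / θ) = f n ^ (1 / θ) * (z * f n ^ (-(1 / θ)) + β) := by
      rw [Real.rpow_neg h.le]
      have : f n ^ (1 / θ) ≠ 0 := by positivity
      field_simp
    unfold agg
    rw [h1, Real.mul_rpow (by positivity) (by positivity), ← Real.rpow_mul h.le,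
      one_div_mul_cancel hθ.ne, Real.rpow_one]
    field_simp
  simp_rw [e]
  have hpos : 0 < -(1 / θ) := by
    rw [neg_pos, one_div]; exact inv_lt_zero.2 hθ
  have h1 : Tendsto (fun n => f n ^ (-(1 / θ))) atTop (𝓝 (0 ^ (-(1 / θ)))) :=
    hf.rpow_const (Or.inr hpos.le)
  rw [Real.zero_rpow hpos.ne'] at h1
  have h2 : Tendsto (fun n => (z * f n ^ (-(1 / θ)) + β) ^ θ) atTop (𝓝 ((z * 0 + β) ^ θ)) :=
    ((h1.const_mul z).add_const β).rpow_const (Or.inl (by simpa using hβ.ne'))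
  have h3 := h2.const_sub (β ^ θ)
  simpa using h3

lemma agg_le_affine (hθ : 0 < θ) (hβ : 0 < β) {z₁ δ : ℝ} (hδ : 0 < δ) (hz : 0 < z) (hz₁ : z ≤ z₁)
    (ht : 0 < t) :
    agg β θ z t ≤ ((1 + δ) * β) ^ θ * t + (z₁ + z₁ / δ) ^ θ := by
  unfold agg
  have hz1 : 0 < z₁ := hz.trans_le hz₁
  have hs : 0 < t ^ (1 / θ) := by positivity
  rw [← agg_aux hθ.ne' (by positivity : 0 < (1 + δ) * β) ht]
  rcases le_total z₁ (δ * β * t ^ (1 / θ)) with h | h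
  · have h1 : (z + β * t ^ (1 / θ)) ^ θ ≤ ((1 + δ) * β * t ^ (1 / θ)) ^ θ :=
      Real.rpow_le_rpow (by positivity) (by nlinarith) hθ.le
    have h2 : 0 ≤ (z₁ + z₁ / δ) ^ θ := by positivity
    linarith
  · have h0 : β * t ^ (1 / θ) ≤ z₁ / δ := by
      rw [le_div_iff₀ hδ]; linarith
    have h1 : (z + β * t ^ (1 / θ)) ^ θ ≤ (z₁ + z₁ / δ) ^ θ :=
      Real.rpow_le_rpow (by positivity) (by linarith) hθ.le
    have h2 : 0 ≤ ((1 + δ) * β * t ^ (1 / θ)) ^ θ := by positivity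
    linarith

end Scalar


section Main

variable {X : Type*} [MeasurableSpace X] {π : Measure X} {p : ℝ≥0∞} [Fact (1 ≤ p)]

/-- The abstract properties of the problem that are used in the proof. -/
structure USetup [IsProbabilityMeasure π] (K : Lp ℝ p π →L[ℝ] Lp ℝ p π)
    (A : Lp ℝ p π → Lp ℝ p π) (β θ ξ₀ ξ₁ : ℝ) (ξ : X → ℝ) : Prop where
  hp : p ≠ ⊤
  pos : OpPos K
  strict : ∀ f : Lp ℝ p π, 0 ≤ f → f ≠ 0 → ∀ᵐ x ∂π, 0 < K f x
  rpos : 0 < specRad K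
  hβ : 0 < β
  hξ₀ : 0 < ξ₀
  hξ₁ : 0 < ξ₁
  lo : ∀ x, ξ₀ ≤ ξ x
  hi : ∀ x, ξ x ≤ ξ₁
  hA : ∀ g : Lp ℝ p π, (∀ᵐ x ∂π, 0 < g x) →
      (A g : X → ℝ) =ᵐ[π] fun x => agg β θ (ξ x) (K g x)
  cpt : ∃ i : ℕ, IsCompactOperator ⇑(K ^ i)

variable [IsProbabilityMeasure π] {K : Lp ℝ p π →L[ℝ] Lp ℝ p π}
    {A : Lp ℝ p π → Lp ℝ p π} {β θ ξ₀ ξ₁ : ℝ} {ξ : X → ℝ}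

namespace USetup

lemma z_pos (S : USetup K A β θ ξ₀ ξ₁ ξ) (x : X) : 0 < ξ x := S.hξ₀.trans_le (S.lo x)

lemma K_pos (S : USetup K A β θ ξ₀ ξ₁ ξ) {g : Lp ℝ p π} (hg : ∀ᵐ x ∂π, 0 < g x) :
    ∀ᵐ x ∂π, 0 < K g x :=
  S.strict g (lp_pos_of_pos hg) (lp_ne_zero_of_pos hg)

lemma A_pos (S : USetup K A β θ ξ₀ ξ₁ ξ) {g : Lp ℝ p π} (hg : ∀ᵐ x ∂π, 0 < g x) :
    ∀ᵐ x ∂π, 0 < A g x := by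
  filter_upwards [S.hA g hg, S.K_pos hg] with x h1 h2
  rw [h1]
  exact agg_pos S.hβ (S.z_pos x) h2

lemma A_mono (S : USetup K A β θ ξ₀ ξ₁ ξ) {g h : Lp ℝ p π} (hg : ∀ᵐ x ∂π, 0 < g x)
    (hgh : g ≤ h) : A g ≤ A h := by
  have hh : ∀ᵐ x ∂π, 0 < h x := by
    filter_upwards [hg, (Lp.coeFn_le _ _).2 hgh] with x h1 h2
    exact h1.trans_le h2
  rw [← Lp.coeFn_le]
  filter_upwards [S.hA g hg, S.K_pos hg, S.hA h hh, (Lp.coeFn_le _ _).2 (S.pos.mono hgh)]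
    with x h1 h2 h3 h4
  rw [h1, h3]
  exact agg_mono S.hβ (S.z_pos x) h2 h4

lemma closed (S : USetup K A β θ ξ₀ ξ₁ ξ) {g y e : ℕ → Lp ℝ p π} {g' y' e' : Lp ℝ p π}
    (hg : Tendsto g atTop (𝓝 g')) (hy : Tendsto y atTop (𝓝 y')) (he : Tendsto e atTop (𝓝 e'))
    (hK : ∀ᵐ x ∂π, 0 < K g' x)
    (h : ∀ n, (y n : X → ℝ) =ᵐ[π] fun x => agg β θ (ξ x) (K (g n) x) + e n x) :
    (y' : X → ℝ) =ᵐ[π] fun x => agg β θ (ξ x) (K g' x) + e' x := by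
  obtain ⟨n1, hn1, h1⟩ := lp_exists_subseq_ae ((K.continuous.tendsto _).comp hg)
  obtain ⟨n2, hn2, h2⟩ := lp_exists_subseq_ae ((hy.sub he).comp hn1.tendsto_atTop)
  filter_upwards [hK, h1, h2, ae_all_iff.2 h, Lp.coeFn_sub y' e',
    ae_all_iff.2 fun n => Lp.coeFn_sub (y n) (e n)] with x hK h1 h2 h h4 h5
  have h3 := agg_tendsto (θ := θ) S.hβ (S.z_pos x) hK (h1.comp hn2.tendsto_atTop)
  rw [h4] at h2
  have h6 := tendsto_nhds_unique h2 (h3.congr fun n => by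
    simp only [Function.comp, h5, Pi.sub_apply, h]; ring)
  simp only [Pi.sub_apply] at h6
  linarith

lemma fixed_of_tendsto (S : USetup K A β θ ξ₀ ξ₁ ξ) {g g' : Lp ℝ p π}
    (hg : ∀ᵐ x ∂π, 0 < g x) (hg' : ∀ᵐ x ∂π, 0 < g' x)
    (h : Tendsto (fun n => A^[n] g) atTop (𝓝 g')) : A g' = g' := by
  have hn : ∀ n, ∀ᵐ x ∂π, 0 < (A^[n] g) x := by
    intro n
    induction n with
    | zero => exact hg
    | succ n ih => rw [Function.iterate_succ_apply']; exact S.A_pos ih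
  have := S.closed (y := fun n => A^[n+1] g) (e := fun _ => 0) h
    (h.comp (tendsto_add_atTop_nat 1)) tendsto_const_nhds (S.K_pos hg') (by
      intro n
      simp only [Function.iterate_succ_apply']
      filter_upwards [S.hA _ (hn n), Lp.coeFn_zero ℝ p π] with x h1 h2
      rw [h1, h2]; simp)
  apply Lp.ext
  filter_upwards [this, S.hA _ hg', Lp.coeFn_zero ℝ p π] with x h1 h2 h3
  rw [h2, h1, h3]; simp

lemma exists_dual (S : USetup K A β θ ξ₀ ξ₁ ξ) : ∃ ψ : Lp ℝ p π →L[ℝ] ℝ,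
    (∀ f, 0 ≤ f → f ≠ 0 → 0 < ψ f) ∧ ∀ f, ψ (K f) = specRad K * ψ f := by
  obtain ⟨i, hi⟩ := S.cpt
  obtain ⟨ψ, h1, h2, h3⟩ := exists_dual_eigenvector S.pos S.rpos hi
  exact ⟨ψ, fun f hf hf0 => dual_strictly_pos S.hp S.strict S.rpos h1 h2 h3 hf hf0, h3⟩

lemma cond_pos (S : USetup K A β θ ξ₀ ξ₁ ξ) (hθ : 0 < θ) :
    β * specRad K ^ (1 / θ) < 1 ↔ β ^ θ * specRad K < 1 := by
  rw [← agg_aux hθ.ne' S.hβ S.rpos]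
  have h : 0 < β * specRad K ^ (1 / θ) := mul_pos S.hβ (Real.rpow_pos_of_pos S.rpos _)
  constructor
  · intro h1; exact Real.rpow_lt_one h.le h1 hθ
  · intro h1
    by_contra h2
    exact absurd (Real.one_le_rpow (not_lt.1 h2) hθ.le) (not_le.2 h1)

lemma cond_neg (S : USetup K A β θ ξ₀ ξ₁ ξ) (hθ : θ < 0) :
    β * specRad K ^ (1 / θ) < 1 ↔ 1 < β ^ θ * specRad K := by
  rw [← agg_aux hθ.ne S.hβ S.rpos]
  have h : 0 < β * specRad K ^ (1 / θ) := mul_pos S.hβ (Real.rpow_pos_of_pos S.rpos _)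
  constructor
  · intro h1; exact Real.one_lt_rpow_of_pos_of_lt_one_of_neg h h1 hθ
  · intro h1
    by_contra h2
    exact absurd (Real.rpow_le_one_of_one_le_of_nonpos (not_lt.1 h2) hθ.le) (not_le.2 h1)

lemma cond_of_fixed (S : USetup K A β θ ξ₀ ξ₁ ξ) (hθ : θ ≠ 0) {g : Lp ℝ p π}
    (hg : ∀ᵐ x ∂π, 0 < g x) (h : A g = g) : β * specRad K ^ (1 / θ) < 1 := by
  obtain ⟨ψ, hψ, hψK⟩ := S.exists_dual
  have hψg : 0 < ψ g := hψ g (lp_pos_of_pos hg) (lp_ne_zero_of_pos hg)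
  have hAg := S.hA g hg
  rw [h] at hAg
  rcases lt_or_gt_of_ne hθ with h0 | h0
  · rw [S.cond_neg h0]
    have : ∀ᵐ x ∂π, 0 < (β ^ θ • K g - g) x := by
      filter_upwards [hAg, S.K_pos hg, Lp.coeFn_sub (β ^ θ • K g) g, Lp.coeFn_smul (β ^ θ) (K g)]
        with x h1 h2 h3 h4
      rw [h3, Pi.sub_apply, h4, Pi.smul_apply, smul_eq_mul, h1]
      have := agg_lt h0 S.hβ (S.z_pos x) h2
      linarith
    have := hψ _ (lp_pos_of_pos this) (lp_ne_zero_of_pos this)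
    rw [map_sub, map_smul, hψK, smul_eq_mul] at this
    by_contra h5
    nlinarith
  · rw [S.cond_pos h0]
    have : ∀ᵐ x ∂π, 0 < (g - β ^ θ • K g) x := by
      filter_upwards [hAg, S.K_pos hg, Lp.coeFn_sub g (β ^ θ • K g), Lp.coeFn_smul (β ^ θ) (K g)]
        with x h1 h2 h3 h4
      rw [h3, Pi.sub_apply, h4, Pi.smul_apply, smul_eq_mul, h1]
      have := lt_agg h0 S.hβ (S.z_pos x) h2
      linarith
    have := hψ _ (lp_pos_of_pos this) (lp_ne_zero_of_pos this)
    rw [map_sub, map_smul, hψK, smul_eq_mul] at this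
    by_contra h5
    nlinarith

end USetup

lemma const_coe (c : ℝ) : (Lp.const p π c : X → ℝ) =ᵐ[π] fun _ => c := Lp.coeFn_const p π c

lemma const_pos {c : ℝ} (hc : 0 < c) : ∀ᵐ x ∂π, 0 < (Lp.const p π c : X → ℝ) x := by
  filter_upwards [const_coe (p := p) (π := π) c] with x hx
  rw [hx]; exact hc

namespace USetup

lemma exists_fixed_pos (S : USetup K A β θ ξ₀ ξ₁ ξ) (hθ : 0 < θ)
    (h : β * specRad K ^ (1 / θ) < 1) : ∃ g : Lp ℝ p π, (∀ᵐ x ∂π, 0 < g x) ∧ A g = g := by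
  have hβ := S.hβ
  have hρ := S.rpos
  set b := β * specRad K ^ (1 / θ) with hb
  have hb0 : 0 < b := mul_pos hβ (Real.rpow_pos_of_pos hρ _)
  obtain ⟨δ, hδ, hδb⟩ : ∃ δ : ℝ, 0 < δ ∧ (1 + δ) * b < 1 := by
    refine ⟨(1 - b) / (2 * b), by apply div_pos <;> linarith, ?_⟩
    have : (1 + (1 - b) / (2 * b)) * b = (1 + b) / 2 := by field_simp; ring
    rw [this]; linarith
  have hc0 : 0 < ((1 + δ) * β) := by positivity
  have hcρ : ((1 + δ) * β) ^ θ * specRad K < 1 := by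
    rw [← agg_aux hθ.ne' hc0 hρ]
    refine Real.rpow_lt_one (by positivity) ?_ hθ
    rw [hb] at hδb
    linarith
  set c := ((1 + δ) * β) ^ θ with hc
  have hcp : 0 < c := Real.rpow_pos_of_pos hc0 _
  set C := (ξ₁ + ξ₁ / δ) ^ θ with hC
  have hC0 : 0 < C := Real.rpow_pos_of_pos (by have := S.hξ₁; positivity) _
  obtain ⟨N, hN0, hN⟩ := exists_norm_pow_lt K (l := 1 / c) (by rw [lt_div_iff₀ hcp]; linarith)
  have hTN : ‖(c • K) ^ N‖ < 1 := by
    rw [smul_pow, norm_smul, Real.norm_of_nonneg (by positivity)]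
    rw [one_div, inv_pow] at hN
    calc c ^ N * ‖K ^ N‖ < c ^ N * (c ^ N)⁻¹ := by gcongr
      _ = 1 := mul_inv_cancel₀ (by positivity)
  have hT : OpPos (c • K) := S.pos.smul hcp.le
  obtain ⟨R, hR, hR1, hR2⟩ := exists_pos_inverse hT hTN
  have hC' : (0 : Lp ℝ p π) ≤ Lp.const p π C := lp_pos_of_pos (const_pos hC0)
  set u := R (Lp.const p π C) with hu
  have hu1 : u = c • K u + Lp.const p π C := by
    have := congrArg (fun T : Lp ℝ p π →L[ℝ] Lp ℝ p π => T (Lp.const p π C)) hR1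
    simp only [ContinuousLinearMap.mul_apply, ContinuousLinearMap.sub_apply,
      ContinuousLinearMap.one_apply, ContinuousLinearMap.smul_apply] at this
    rw [← hu] at this
    rw [← this]; abel
  have hu0 : 0 ≤ u := hR _ hC'
  have hAu : ∀ g : Lp ℝ p π, (∀ᵐ x ∂π, 0 < g x) → g ≤ u → A g ≤ u := by
    intro g hg hgu
    rw [← Lp.coeFn_le]
    have e := hu1 ▸ (Lp.coeFn_add (c • K u) (Lp.const p π C))
    have e : (u : X → ℝ) =ᵐ[π] ⇑(c • K u) + ⇑(Lp.const p π C) := by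
      conv_lhs => rw [hu1]
      exact Lp.coeFn_add _ _
    filter_upwards [S.hA g hg, S.K_pos hg, e, Lp.coeFn_smul c (K u), const_coe (p := p) (π := π) C,
      (Lp.coeFn_le _ _).2 (S.pos.mono hgu)] with x h1 h2 h3 h4 h5 h6
    rw [h1, h3, Pi.add_apply, h4, h5, Pi.smul_apply, smul_eq_mul]
    have := agg_le_affine hθ hβ hδ (S.z_pos x) (S.hi x) h2
    rw [← hc, ← hC] at this
    nlinarith
  set g0 : Lp ℝ p π := Lp.const p π (ξ₀ ^ θ) with hg0
  have hg0p : ∀ᵐ x ∂π, 0 < g0 x := const_pos (Real.rpow_pos_of_pos S.hξ₀ _)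
  have hA0 : ∀ g : Lp ℝ p π, (∀ᵐ x ∂π, 0 < g x) → g0 ≤ A g := by
    intro g hg
    rw [← Lp.coeFn_le]
    filter_upwards [S.hA g hg, S.K_pos hg, const_coe (p := p) (π := π) (ξ₀ ^ θ)] with x h1 h2 h3
    rw [h1, h3]
    exact const_le_agg hθ hβ S.hξ₀ (S.lo x) h2
  have hg0u : g0 ≤ u := by
    have h1 : Lp.const p π C ≤ u := by
      conv_rhs => rw [hu1]
      exact le_add_of_nonneg_left (hT _ hu0)
    refine le_trans ?_ h1
    rw [← Lp.coeFn_le]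
    filter_upwards [const_coe (p := p) (π := π) (ξ₀ ^ θ), const_coe (p := p) (π := π) C]
      with x h1 h2
    rw [h1, h2]
    have h3 := S.hξ₁
    have h4 := S.hξ₀
    have h5 : ξ₀ ≤ ξ₁ := (S.lo x).trans (S.hi x)
    exact Real.rpow_le_rpow h4.le (by have : 0 < ξ₁ / δ := by positivity
                                      linarith) hθ.le
  have hpos : ∀ n, ∀ᵐ x ∂π, 0 < (A^[n] g0) x := by
    intro n
    induction n with
    | zero => exact hg0p
    | succ n ih => rw [Function.iterate_succ_apply']; exact S.A_pos ih
  have hle : ∀ n, A^[n] g0 ≤ u := by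
    intro n
    induction n with
    | zero => exact hg0u
    | succ n ih => rw [Function.iterate_succ_apply']; exact hAu _ (hpos n) ih
  have hge : ∀ n, g0 ≤ A^[n] g0 := by
    intro n
    cases n with
    | zero => exact le_rfl
    | succ n => rw [Function.iterate_succ_apply']; exact hA0 _ (hpos n)
  have hmono : Monotone fun n => A^[n] g0 := by
    refine monotone_nat_of_le_succ fun n => ?_
    induction n with
    | zero => exact hge 1
    | succ n ih =>
      rw [Function.iterate_succ_apply' A n, Function.iterate_succ_apply' A (n + 1)]
      exact S.A_mono (hpos n) ih
  obtain ⟨G, hG⟩ := lp_monotone_limit S.hp hmono (fun n => lp_pos_of_pos (hpos n)) hle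
  have hGp : ∀ᵐ x ∂π, 0 < G x := by
    have : g0 ≤ G := ge_of_tendsto' hG hge
    filter_upwards [hg0p, (Lp.coeFn_le _ _).2 this] with x h1 h2
    exact h1.trans_le h2
  exact ⟨G, hGp, S.fixed_of_tendsto hg0p hGp hG⟩

end USetup

end Main


section Neg

variable {X : Type*} [MeasurableSpace X] {π : Measure X} {p : ℝ≥0∞} [Fact (1 ≤ p)]
  [IsProbabilityMeasure π]

lemma lp_squeeze_mul (hp : p ≠ ⊤) {r y : ℕ → Lp ℝ p π} {y' : Lp ℝ p π} {α : ℕ → X → ℝ} {c : ℝ}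
    (hc : 0 ≤ c) (hy : Tendsto y atTop (𝓝 y')) (hr0 : ∀ n, 0 ≤ r n)
    (hr : ∀ n, ∀ᵐ x ∂π, r n x ≤ α n x * y n x)
    (hα : ∀ n, ∀ᵐ x ∂π, 0 ≤ α n x ∧ α n x ≤ c)
    (hα0 : ∀ᵐ x ∂π, Tendsto (fun n => α n x) atTop (𝓝 0)) :
    Tendsto r atTop (𝓝 0) := by
  set m : ℕ → Lp ℝ p π := fun n => (r n - c • |y n - y'|) ⊔ 0 with hm
  have hm0 : ∀ n, 0 ≤ m n := fun n => le_sup_right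
  have hmx : ∀ n, ∀ᵐ x ∂π, 0 ≤ m n x ∧ m n x ≤ α n x * |y' x| := by
    intro n
    filter_upwards [hr n, hα n, Lp.coeFn_sup (r n - c • |y n - y'|) 0, Lp.coeFn_zero ℝ p π,
      Lp.coeFn_sub (r n) (c • |y n - y'|), Lp.coeFn_smul c |y n - y'|, Lp.coeFn_abs (y n - y'),
      Lp.coeFn_sub (y n) y'] with x h1 h2 h3 h4 h5 h6 h7 h8
    have e : m n x = max (r n x - c * |y n x - y' x|) 0 := by
      simp only [hm]
      rw [h3, Pi.sup_apply, h4, h5, Pi.sub_apply, h6, Pi.smul_apply, h7, h8]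
      simp
    rw [e]
    refine ⟨le_max_right _ _, max_le ?_ (mul_nonneg h2.1 (abs_nonneg _))⟩
    have h9 : y n x ≤ |y' x| + |y n x - y' x| := by
      have a1 := le_abs_self (y' x)
      have a2 := le_abs_self (y n x - y' x)
      linarith
    have h10 := mul_le_mul_of_nonneg_left h9 h2.1
    have h11 := mul_le_mul_of_nonneg_right h2.2 (abs_nonneg (y n x - y' x))
    linarith
  have hmlim : Tendsto m atTop (𝓝 0) := by
    refine lp_dominated (F := c • |y'|) hp (fun n => ?_) ?_
    · rw [abs_of_nonneg (hm0 n), ← Lp.coeFn_le]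
      filter_upwards [hmx n, hα n, Lp.coeFn_smul c |y'|, Lp.coeFn_abs y'] with x h1 h2 h3 h4
      rw [h3, Pi.smul_apply, h4, smul_eq_mul]
      exact h1.2.trans (mul_le_mul_of_nonneg_right h2.2 (abs_nonneg _))
    · filter_upwards [ae_all_iff.2 hmx, hα0, Lp.coeFn_zero ℝ p π] with x h1 h2 h3
      rw [h3]
      refine squeeze_zero (fun n => (h1 n).1) (fun n => (h1 n).2) ?_
      simpa using h2.mul_const |y' x|
  have hle : ∀ n, r n ≤ m n + c • |y n - y'| := by
    intro n
    rw [← sub_le_iff_le_add]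
    exact le_sup_left
  have h1 : Tendsto (fun n => m n + c • |y n - y'|) atTop (𝓝 0) := by
    have h2 : Tendsto (fun n => |y n - y'|) atTop (𝓝 0) := by
      rw [tendsto_zero_iff_norm_tendsto_zero]
      simp only [norm_abs_eq_norm]
      exact (tendsto_iff_norm_sub_tendsto_zero).1 hy
    simpa using hmlim.add (h2.const_smul c)
  rw [tendsto_zero_iff_norm_tendsto_zero] at h1 ⊢
  exact squeeze_zero (fun n => norm_nonneg _)
    (fun n => norm_le_norm_of_nonneg_le (hr0 n) (hle n)) h1

lemma neg_contra_aux (hp : p ≠ ⊤) {K : Lp ℝ p π →L[ℝ] Lp ℝ p π} (hK : OpPos K)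
    {ψ : Lp ℝ p π →L[ℝ] ℝ} (hψ : ∀ f, 0 ≤ f → f ≠ 0 → 0 < ψ f) {ρ : ℝ}
    (hψK : ∀ f, ψ (K f) = ρ * ψ f) {c : ℝ} (hc : 0 < c) (hcρ : 1 < c * ρ) {i : ℕ}
    {h : ℕ → Lp ℝ p π} {b : ℕ → ℝ} {α : ℕ → X → ℝ} {one v : Lp ℝ p π}
    (hone : 0 ≤ one) (hone0 : one ≠ 0) (h0 : ∀ n, 0 ≤ h n) (h1 : ∀ n, ‖h n‖ = 1)
    (hb : ∀ n, 0 ≤ b n ∧ b n ≤ 1) (hr0 : ∀ n, 0 ≤ c • K (h n) + b n • one - h n)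
    (hr : ∀ n, ∀ᵐ x ∂π, (c • K (h n) + b n • one - h n : Lp ℝ p π) x ≤ α n x * K (h n) x)
    (hα : ∀ n, ∀ᵐ x ∂π, 0 ≤ α n x ∧ α n x ≤ c)
    (hα0 : ∀ᵐ x ∂π, Tendsto (fun n => α n x) atTop (𝓝 0))
    (hv : Tendsto (fun n => ((c • K) ^ i) (h n)) atTop (𝓝 v)) : False := by
  set T := c • K with hT
  have hTp : OpPos T := hK.smul hc.le
  set G : Lp ℝ p π →L[ℝ] Lp ℝ p π := ∑ l ∈ Finset.range i, T ^ l with hG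
  set r : ℕ → Lp ℝ p π := fun n => T (h n) + b n • one - h n with hrdef
  have hT' : ∀ f, T f = c • K f := fun f => rfl
  have hstep : ∀ n, h n ≤ T (h n) + one := by
    intro n
    have a1 : h n ≤ T (h n) + b n • one := sub_nonneg.1 (hr0 n)
    have a2 : b n • one ≤ one := by
      have : (0 : Lp ℝ p π) ≤ (1 - b n) • one := smul_nonneg (sub_nonneg.2 (hb n).2) hone
      rw [sub_smul, one_smul] at this
      exact sub_nonneg.1 this
    exact a1.trans (by gcongr)
  have hiter : ∀ n (j : ℕ), h n ≤ (T ^ j) (h n) + (∑ l ∈ Finset.range j, T ^ l) one := by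
    intro n j
    induction j with
    | zero => simp
    | succ j ih =>
      refine ih.trans ?_
      have := (hTp.pow j).mono (hstep n)
      rw [map_add] at this
      rw [Finset.sum_range_succ, ContinuousLinearMap.add_apply, pow_succ,
        ContinuousLinearMap.mul_apply]
      calc (T ^ j) (h n) + (∑ l ∈ Finset.range j, T ^ l) one
          ≤ ((T ^ j) (T (h n)) + (T ^ j) one) + (∑ l ∈ Finset.range j, T ^ l) one := by gcongr
        _ = _ := by abel
  have hrlim : Tendsto r atTop (𝓝 0) := by
    refine lp_squeeze_mul (y := fun n => K ((T ^ i) (h n) + G one)) (α := α) hp hc.le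
      ((K.continuous.tendsto _).comp (hv.add_const (G one))) hr0 ?_ hα hα0
    intro n
    filter_upwards [hr n, hα n, (Lp.coeFn_le _ _).2 (hK.mono (hiter n i))] with x a1 a2 a3
    exact a1.trans (mul_le_mul_of_nonneg_left a3 a2.1)
  have hψr : ∀ n, ψ (r n) = (c * ρ - 1) * ψ (h n) + b n * ψ one := by
    intro n
    simp only [hrdef, hT', map_sub, map_add, map_smul, hψK, smul_eq_mul]
    ring
  have hψh0 : ∀ n, 0 ≤ ψ (h n) := fun n =>
    (hψ _ (h0 n) (by intro e; have := h1 n; rw [e] at this; simp at this)).le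
  have hψ1 : 0 < ψ one := hψ _ hone hone0
  have hψrlim : Tendsto (fun n => ψ (r n)) atTop (𝓝 0) := by
    have a := (ψ.continuous.tendsto _).comp hrlim
    rw [map_zero] at a
    exact a
  have hblim : Tendsto b atTop (𝓝 0) := by
    refine squeeze_zero (g := fun n => ψ (r n) / ψ one) (fun n => (hb n).1) (fun n => ?_)
      (by simpa using hψrlim.div_const (ψ one))
    rw [le_div_iff₀ hψ1, hψr]
    have := mul_nonneg (sub_pos.2 hcρ).le (hψh0 n)
    linarith
  have hhlim0 : Tendsto (fun n => ψ (h n)) atTop (𝓝 0) := by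
    refine squeeze_zero (g := fun n => ψ (r n) / (c * ρ - 1)) hψh0 (fun n => ?_)
      (by simpa using hψrlim.div_const (c * ρ - 1))
    rw [le_div_iff₀ (sub_pos.2 hcρ), hψr]
    have := mul_nonneg (hb n).1 hψ1.le
    linarith
  have hhlim : Tendsto h atTop (𝓝 v) := by
    have e : ∀ n, (T ^ i) (h n) + G (b n • one - r n) = h n := by
      intro n
      have a1 := geom_sum_mul_neg T i
      rw [← hG] at a1
      have a2 := congrArg (fun S : Lp ℝ p π →L[ℝ] Lp ℝ p π => S (h n)) a1
      simp only [ContinuousLinearMap.mul_apply, ContinuousLinearMap.sub_apply,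
        ContinuousLinearMap.one_apply] at a2
      have a3 : b n • one - r n = h n - T (h n) := by simp only [hrdef]; abel
      rw [a3, a2]; abel
    have a4 : Tendsto (fun n => b n • one - r n) atTop (𝓝 0) := by
      simpa using (hblim.smul_const one).sub hrlim
    have a5 := hv.add ((G.continuous.tendsto _).comp a4)
    simp only [Function.comp, e, map_zero, add_zero] at a5
    exact a5
  have hv0 : 0 ≤ v := ge_of_tendsto' hhlim h0
  have hv1 : ‖v‖ = 1 := tendsto_nhds_unique hhlim.norm (by simp only [h1]; exact tendsto_const_nhds)
  have := hψ v hv0 (by rintro rfl; simp at hv1)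
  have h2 := tendsto_nhds_unique ((ψ.continuous.tendsto _).comp hhlim) hhlim0
  exact this.ne' h2

lemma neg_contra (hp : p ≠ ⊤) {K : Lp ℝ p π →L[ℝ] Lp ℝ p π} (hK : OpPos K)
    {ψ : Lp ℝ p π →L[ℝ] ℝ} (hψ : ∀ f, 0 ≤ f → f ≠ 0 → 0 < ψ f) {ρ : ℝ}
    (hψK : ∀ f, ψ (K f) = ρ * ψ f) {c : ℝ} (hc : 0 < c) (hcρ : 1 < c * ρ)
    (hcpt : ∃ i : ℕ, IsCompactOperator ⇑(K ^ i))
    {h : ℕ → Lp ℝ p π} {b : ℕ → ℝ} {α : ℕ → X → ℝ} {one : Lp ℝ p π}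
    (hone : 0 ≤ one) (hone0 : one ≠ 0) (h0 : ∀ n, 0 ≤ h n) (h1 : ∀ n, ‖h n‖ = 1)
    (hb : ∀ n, 0 ≤ b n ∧ b n ≤ 1) (hr0 : ∀ n, 0 ≤ c • K (h n) + b n • one - h n)
    (hr : ∀ n, ∀ᵐ x ∂π, (c • K (h n) + b n • one - h n : Lp ℝ p π) x ≤ α n x * K (h n) x)
    (hα : ∀ n, ∀ᵐ x ∂π, 0 ≤ α n x ∧ α n x ≤ c)
    (hα0 : ∀ᵐ x ∂π, Tendsto (fun n => α n x) atTop (𝓝 0)) : False := by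
  obtain ⟨i, hi⟩ := hcpt
  obtain ⟨s, hs, hsub⟩ := hi.image_closedBall_subset_compact 1
  obtain ⟨v, -, φ, hφ, hlim⟩ := hs.tendsto_subseq (x := fun n => (K ^ i) (h n))
    (fun n => hsub ⟨h n, by simp [h1], rfl⟩)
  refine neg_contra_aux (v := c ^ i • v) (i := i) (h := h ∘ φ) (b := b ∘ φ)
    (α := fun n => α (φ n)) hp hK hψ hψK hc hcρ
    hone hone0 (fun n => h0 _) (fun n => h1 _) (fun n => hb _) (fun n => hr0 _) (fun n => hr _)
    (fun n => hα _) ?_ ?_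
  · filter_upwards [hα0] with x hx
    exact hx.comp hφ.tendsto_atTop
  · rw [smul_pow]
    exact hlim.const_smul (c ^ i)

variable {K : Lp ℝ p π →L[ℝ] Lp ℝ p π}
    {A : Lp ℝ p π → Lp ℝ p π} {β θ ξ₀ ξ₁ : ℝ} {ξ : X → ℝ}

/-- Perturbed fixed points in the case `θ < 0`. -/
lemma USetup.exists_perturbed (S : USetup K A β θ ξ₀ ξ₁ ξ) (hθ : θ < 0) :
    ∃ g : ℕ → Lp ℝ p π, Antitone g ∧ (∀ n, ∀ᵐ x ∂π, 0 < g n x) ∧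
      (∀ n : ℕ, Lp.const p π (1 / ((n : ℝ) + 1)) ≤ g n) ∧
      ∀ n : ℕ, (g n : X → ℝ) =ᵐ[π] fun x => agg β θ (ξ x) (K (g n) x) +
        (Lp.const p π (1 / ((n : ℝ) + 1)) : Lp ℝ p π) x := by
  have hβ := S.hβ
  set e : ℕ → Lp ℝ p π := fun n => Lp.const p π (1 / ((n : ℝ) + 1)) with he
  have hep : ∀ n, ∀ᵐ x ∂π, 0 < e n x := fun n => const_pos (by positivity)
  have hemono : Antitone e := by
    intro a b hab
    rw [← Lp.coeFn_le]
    filter_upwards [const_coe (p := p) (π := π) (1 / ((a : ℝ) + 1)),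
      const_coe (p := p) (π := π) (1 / ((b : ℝ) + 1))] with x h1 h2
    simp only [he]
    rw [h1, h2]
    gcongr
  set u : Lp ℝ p π := Lp.const p π (ξ₀ ^ θ + 1) with hu
  set B : ℕ → Lp ℝ p π → Lp ℝ p π := fun n g => A g + e n with hB
  have hAnn : ∀ g : Lp ℝ p π, (∀ᵐ x ∂π, 0 < g x) → 0 ≤ A g := fun g hg =>
    lp_pos_of_pos (S.A_pos hg)
  have hpos_of : ∀ {f g : Lp ℝ p π}, (∀ᵐ x ∂π, 0 < f x) → f ≤ g → ∀ᵐ x ∂π, 0 < g x := by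
    intro f g hf hfg
    filter_upwards [hf, (Lp.coeFn_le _ _).2 hfg] with x h1 h2
    exact h1.trans_le h2
  have hBe : ∀ n g, (∀ᵐ x ∂π, 0 < g x) → e n ≤ B n g := fun n g hg =>
    le_add_of_nonneg_left (hAnn g hg)
  have hBu : ∀ n g, (∀ᵐ x ∂π, 0 < g x) → B n g ≤ u := by
    intro n g hg
    rw [← Lp.coeFn_le]
    filter_upwards [Lp.coeFn_add (A g) (e n), S.hA g hg, S.K_pos hg,
      const_coe (p := p) (π := π) (1 / ((n : ℝ) + 1)), const_coe (p := p) (π := π) (ξ₀ ^ θ + 1)]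
      with x h1 h2 h3 h4 h5
    simp only [hB, hu]
    rw [h1, h5, Pi.add_apply, h2]
    simp only [he]
    rw [h4]
    have h6 := agg_le_const hθ hβ S.hξ₀ (S.lo x) h3
    have h7 : 1 / ((n : ℝ) + 1) ≤ 1 := by
      rw [div_le_one (by positivity)]
      have : (0 : ℝ) ≤ n := n.cast_nonneg
      linarith
    linarith
  have heu : ∀ n, e n ≤ u := fun n => (hBe n (e n) (hep n)).trans (hBu n _ (hep n))
  have hup : ∀ᵐ x ∂π, 0 < u x := hpos_of (hep 0) (heu 0)
  set G : ℕ → ℕ → Lp ℝ p π := fun n j => (B n)^[j] u with hG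
  have hGs : ∀ n j, G n (j + 1) = A (G n j) + e n := fun n j => by
    simp only [hG, Function.iterate_succ_apply']; rfl
  have hGe : ∀ n j, e n ≤ G n j := by
    intro n j
    induction j with
    | zero => exact heu n
    | succ j ih => rw [hGs]; exact hBe n _ (hpos_of (hep n) ih)
  have hGp : ∀ n j, ∀ᵐ x ∂π, 0 < G n j x := fun n j => hpos_of (hep n) (hGe n j)
  have hGant : ∀ n, Antitone (G n) := by
    intro n
    refine antitone_nat_of_succ_le fun j => ?_
    induction j with
    | zero => rw [hGs]; exact hBu n _ hup
    | succ j ih =>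
      rw [hGs n (j + 1)]
      nth_rewrite 2 [hGs n j]
      have := S.A_mono (hGp n (j + 1)) ih
      gcongr
  have hGant' : ∀ a b, a ≤ b → ∀ j, G b j ≤ G a j := by
    intro a b hab j
    induction j with
    | zero => exact le_rfl
    | succ j ih =>
      rw [hGs, hGs]
      exact add_le_add (S.A_mono (hGp b j) ih) (hemono hab)
  have hlim : ∀ n, ∃ g, Tendsto (G n) atTop (𝓝 g) := fun n =>
    lp_antitone_limit S.hp (hGant n) (fun j => lp_pos_of_pos (hGp n j))
  choose g hg using hlim
  have hge : ∀ n, e n ≤ g n := fun n => ge_of_tendsto' (hg n) (hGe n)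
  have hgp : ∀ n, ∀ᵐ x ∂π, 0 < g n x := fun n => hpos_of (hep n) (hge n)
  refine ⟨g, fun a b hab => le_of_tendsto_of_tendsto' (hg b) (hg a) (hGant' a b hab), hgp, hge,
    fun n => ?_⟩
  refine S.closed (y := fun j => G n (j + 1)) (e := fun _ => e n) (hg n)
    ((hg n).comp (tendsto_add_atTop_nat 1)) tendsto_const_nhds (S.K_pos (hgp n)) fun j => ?_
  simp only [hGs]
  filter_upwards [Lp.coeFn_add (A (G n j)) (e n), S.hA _ (hGp n j)] with x h1 h2
  rw [h1, Pi.add_apply, h2]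

lemma USetup.exists_fixed_neg (S : USetup K A β θ ξ₀ ξ₁ ξ) (hθ : θ < 0)
    (h : β * specRad K ^ (1 / θ) < 1) : ∃ g : Lp ℝ p π, (∀ᵐ x ∂π, 0 < g x) ∧ A g = g := by
  rw [S.cond_neg hθ] at h
  have hβ := S.hβ
  obtain ⟨g, hanti, hgp, hge, hgeq⟩ := S.exists_perturbed hθ
  obtain ⟨g', hg'⟩ := lp_antitone_limit S.hp hanti (fun n => lp_pos_of_pos (hgp n))
  have hg'0 : 0 ≤ g' := ge_of_tendsto' hg' fun n => lp_pos_of_pos (hgp n)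
  set one : Lp ℝ p π := Lp.const p π 1 with hone
  have honep : ∀ᵐ x ∂π, 0 < one x := const_pos one_pos
  have heone : ∀ n : ℕ, (Lp.const p π (1 / ((n : ℝ) + 1)) : Lp ℝ p π) = (1 / ((n : ℝ) + 1)) • one := by
    intro n
    apply Lp.ext
    filter_upwards [const_coe (p := p) (π := π) (1 / ((n : ℝ) + 1)), const_coe (p := p) (π := π) 1,
      Lp.coeFn_smul (1 / ((n : ℝ) + 1)) one] with x h1 h2 h3
    rw [h1, h3, Pi.smul_apply, h2]; simp
  have helim : Tendsto (fun n : ℕ => (Lp.const p π (1 / ((n : ℝ) + 1)) : Lp ℝ p π)) atTop (𝓝 0) := by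
    simp only [heone]
    simpa using (tendsto_one_div_add_atTop_nhds_zero_nat (𝕜 := ℝ)).smul_const one
  by_cases hg0 : g' = 0
  · exfalso
    subst hg0
    obtain ⟨ψ, hψ, hψK⟩ := S.exists_dual
    obtain ⟨ns, hns, hae⟩ := lp_exists_subseq_ae ((K.continuous.tendsto _).comp hg')
    rw [map_zero] at hae
    have hgn : ∀ n, 0 < ‖g n‖ := fun n => norm_pos_iff.2 (lp_ne_zero_of_pos (hgp n))
    have hc : 0 < β ^ θ := Real.rpow_pos_of_pos hβ _
    have hone1 : ‖one‖ = 1 := by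
      have hp0 : p ≠ 0 := (zero_lt_one.trans_le (Fact.out : 1 ≤ p)).ne'
      rw [hone, Lp.norm_const]
      · simp
      · exact hp0
    have key : ∀ n, ∀ᵐ x ∂π, (β ^ θ • K (‖g n‖⁻¹ • g n) + (1 / ((n : ℝ) + 1) * ‖g n‖⁻¹) • one
        - ‖g n‖⁻¹ • g n : Lp ℝ p π) x = (β ^ θ - agg β θ (ξ x) (K (g n) x) / K (g n) x) *
          K (‖g n‖⁻¹ • g n) x ∧ 0 < K (‖g n‖⁻¹ • g n) x := by
      intro n
      have e : (β ^ θ • K (‖g n‖⁻¹ • g n) + (1 / ((n : ℝ) + 1) * ‖g n‖⁻¹) • one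
        - ‖g n‖⁻¹ • g n : Lp ℝ p π) =
          ‖g n‖⁻¹ • (β ^ θ • K (g n) + (Lp.const p π (1 / ((n : ℝ) + 1)) : Lp ℝ p π) - g n) := by
        rw [heone, map_smul]; module
      rw [e, map_smul]
      filter_upwards [hgeq n, S.K_pos (hgp n),
        Lp.coeFn_smul ‖g n‖⁻¹ (β ^ θ • K (g n) +
          (Lp.const p π (1 / ((n : ℝ) + 1)) : Lp ℝ p π) - g n),
        Lp.coeFn_sub (β ^ θ • K (g n) + (Lp.const p π (1 / ((n : ℝ) + 1)) : Lp ℝ p π)) (g n),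
        Lp.coeFn_add (β ^ θ • K (g n)) (Lp.const p π (1 / ((n : ℝ) + 1)) : Lp ℝ p π),
        Lp.coeFn_smul (β ^ θ) (K (g n)), Lp.coeFn_smul ‖g n‖⁻¹ (K (g n))]
        with x a1 a2 a3 a4 a5 a6 a7
      rw [a3, Pi.smul_apply, a4, Pi.sub_apply, a5, Pi.add_apply, a6, Pi.smul_apply, a7,
        Pi.smul_apply, a1]
      simp only [smul_eq_mul]
      refine ⟨?_, mul_pos (inv_pos.2 (hgn n)) a2⟩
      field_simp
      ring
    have hα : ∀ n, ∀ᵐ x ∂π, 0 ≤ β ^ θ - agg β θ (ξ x) (K (g n) x) / K (g n) x ∧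
        β ^ θ - agg β θ (ξ x) (K (g n) x) / K (g n) x ≤ β ^ θ := by
      intro n
      filter_upwards [S.K_pos (hgp n)] with x a1
      have a2 := agg_lt hθ hβ (S.z_pos x) a1
      have a3 := agg_pos (θ := θ) hβ (S.z_pos x) a1
      have a4 : agg β θ (ξ x) (K (g n) x) / K (g n) x ≤ β ^ θ := by
        rw [div_le_iff₀ a1]; exact a2.le
      have a5 : 0 ≤ agg β θ (ξ x) (K (g n) x) / K (g n) x := by positivity
      exact ⟨by linarith, by linarith⟩
    refine neg_contra (h := fun n => ‖g (ns n)‖⁻¹ • g (ns n))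
      (b := fun n => 1 / ((ns n : ℝ) + 1) * ‖g (ns n)‖⁻¹)
      (α := fun n x => β ^ θ - agg β θ (ξ x) (K (g (ns n)) x) / K (g (ns n)) x)
      S.hp S.pos hψ hψK hc h S.cpt (lp_pos_of_pos honep) (lp_ne_zero_of_pos honep)
      (fun n => smul_nonneg (inv_pos.2 (hgn _)).le (lp_pos_of_pos (hgp _))) (fun n => ?_)
      (fun n => ⟨by have := hgn (ns n); positivity, ?_⟩) (fun n => ?_) (fun n => ?_)
      (fun n => hα _) ?_
    · rw [norm_smul, norm_inv, norm_norm, inv_mul_cancel₀ (hgn _).ne']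
    · rw [← div_eq_mul_inv, div_le_one (hgn _)]
      have a1 := norm_le_norm_of_nonneg_le
        (lp_pos_of_pos (const_pos (by positivity : 0 < 1 / ((ns n : ℝ) + 1)))) (hge (ns n))
      rw [heone, norm_smul, hone1, mul_one, Real.norm_of_nonneg (by positivity)] at a1
      exact a1
    · rw [← Lp.coeFn_nonneg]
      filter_upwards [key (ns n), hα (ns n)] with x a1 a2
      rw [a1.1]
      exact mul_nonneg a2.1 a1.2.le
    · filter_upwards [key (ns n)] with x a1
      exact a1.1.le
    · filter_upwards [hae, Lp.coeFn_zero ℝ p π, ae_all_iff.2 fun n => S.K_pos (hgp (ns n))]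
        with x a1 a2 a3
      rw [a2] at a1
      exact agg_div_tendsto hθ hβ (S.z_pos x) a3 a1
  · have hKg := S.strict g' hg'0 hg0
    have h1 := S.closed hg' hg' helim hKg hgeq
    have hp' : ∀ᵐ x ∂π, 0 < g' x := by
      filter_upwards [h1, hKg, Lp.coeFn_zero ℝ p π] with x a1 a2 a3
      rw [a1, a3]
      simpa using agg_pos (θ := θ) hβ (S.z_pos x) a2
    refine ⟨g', hp', ?_⟩
    apply Lp.ext
    filter_upwards [h1, S.hA _ hp', Lp.coeFn_zero ℝ p π] with x a1 a2 a3
    rw [a2, a1, a3]; simp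

end Neg

/-- **Existence and uniqueness of recursive utility on an unbounded
(σ-compact) state space.**  Let `X` be a σ-compact metric space, `μ` a σ-finite
Borel measure with full support, `π` a Borel probability measure with a
continuous everywhere strictly positive density `d` with respect to `μ`,
`p ∈ [1, ∞)`, `k` continuous and strictly positive, and suppose the integral
operator `K` on `L_p(X,π)` is bounded and eventually compact (`K^i` compact for
some `i`).  With `ξ` continuous and bounded between positive constants
`ξ₀ ≤ ξ₁`, and `A` the operator `(A g)(x) = (ξ(x) + β (K g(x))^(1/θ))^θ`, the
following are equivalent: (a) `Λ_p = β ρ(K)^(1/θ) < 1`; (b) `A` has a fixed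
point in `L_p(X,π)_+`; (c) some iterate sequence `(A^n g)` from the cone
converges in `L_p` norm to an element of `L_p(X,π)_+`. -/
theorem recursive_utility_unbounded_tfae
    {X : Type*} [MetricSpace X] [SigmaCompactSpace X] [MeasurableSpace X] [BorelSpace X]
    (μ π : Measure X) [SigmaFinite μ] [μ.IsOpenPosMeasure] [IsProbabilityMeasure π]
    (d : X → ℝ) (hd_cont : Continuous d) (hd_pos : ∀ x, 0 < d x)
    (hπ : π = μ.withDensity (fun x => ENNReal.ofReal (d x)))
    (p : ℝ≥0∞) [Fact (1 ≤ p)] (hp_top : p ≠ ⊤)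
    (k : X → X → ℝ) (hk_cont : Continuous (Function.uncurry k))
    (hk_pos : ∀ x y, 0 < k x y)
    (K : Lp ℝ p π →L[ℝ] Lp ℝ p π)
    (hK : ∀ g : Lp ℝ p π, (K g : X → ℝ) =ᵐ[π] fun x => ∫ y, k x y * g y ∂μ)
    (hK_evcompact : ∃ i : ℕ, 0 < i ∧ IsCompactOperator ⇑(K ^ i))
    (β θ : ℝ) (hβ0 : 0 < β) (hβ1 : β < 1) (hθ : θ ≠ 0)
    (ξ : X → ℝ) (hξ_cont : Continuous ξ)
    (ξ₀ ξ₁ : ℝ) (hξ₀ : 0 < ξ₀) (hξ₀₁ : ξ₀ ≤ ξ₁)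
    (hξ_bdd : ∀ x, ξ₀ ≤ ξ x ∧ ξ x ≤ ξ₁)
    (A : Lp ℝ p π → Lp ℝ p π)
    (hA : ∀ g : Lp ℝ p π, (∀ᵐ x ∂π, 0 < g x) →
      (A g : X → ℝ) =ᵐ[π] fun x => (ξ x + β * ((K g : X → ℝ) x) ^ (1 / θ)) ^ θ) :
    List.TFAE
      [ β * specRad K ^ (1 / θ) < 1,
        ∃ g : Lp ℝ p π, (∀ᵐ x ∂π, 0 < g x) ∧ A g = g,
        ∃ g : Lp ℝ p π, (∀ᵐ x ∂π, 0 < g x) ∧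
          ∃ glim : Lp ℝ p π, (∀ᵐ x ∂π, 0 < glim x) ∧
            Tendsto (fun n => A^[n] g) atTop (𝓝 glim) ] := by
  obtain ⟨i, -, hi⟩ := hK_evcompact
  have S : USetup K A β θ ξ₀ ξ₁ ξ :=
    { hp := hp_top
      pos := kernel_opPos hk_pos hd_cont hd_pos hπ hK
      strict := fun f hf hf0 => kernel_strict hk_cont hk_pos hd_cont hd_pos hπ hK f hf hf0
      rpos := kernel_specRad_pos hk_cont hk_pos hd_cont hd_pos hπ hK
      hβ := hβ0
      hξ₀ := hξ₀
      hξ₁ := hξ₀.trans_le hξ₀₁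
      lo := fun x => (hξ_bdd x).1
      hi := fun x => (hξ_bdd x).2
      hA := hA
      cpt := ⟨i, hi⟩ }
  tfae_have 1 → 2 := by
    intro h
    rcases lt_or_gt_of_ne hθ with h0 | h0
    · exact S.exists_fixed_neg h0 h
    · exact S.exists_fixed_pos h0 h
  tfae_have 2 → 1 := by
    rintro ⟨g, hg, h⟩
    exact S.cond_of_fixed hθ hg h
  tfae_have 2 → 3 := by
    rintro ⟨g, hg, h⟩
    refine ⟨g, hg, g, hg, ?_⟩
    simp only [Function.iterate_fixed h]
    exact tendsto_const_nhds
  tfae_have 3 → 2 := by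
    rintro ⟨g, hg, g', hg', h⟩
    exact ⟨g', hg', S.fixed_of_tendsto hg hg' h⟩
  tfae_finish
end

section
/- If the operator A has a nonzero fixed point in L_p(X,π)_+, then β ρ(K)^{1/θ} < 1. -/
open MeasureTheory Filter Topology ENNReal

theorem specRad_le_aux {E : Type*} [NormedAddCommGroup E] [NormedSpace ℝ E] [Lattice E]
    [HasSolidNorm E] [IsOrderedAddMonoid E]
    (hs : ∀ (c : ℝ) (a b : E), 0 ≤ c → a ≤ b → c • a ≤ c • b)
    (K : E →L[ℝ] E) (hK : ∀ a b, a ≤ b → K a ≤ K b) (g : E)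
    (l C : ℝ) (hl : 0 < l) (hC : 0 < C) (hg1 : K g ≤ l • g)
    (hb : ∀ f, |K f| ≤ (C * ‖f‖) • g) : specRad K ≤ l := by
  have key : ∀ n : ℕ, ∀ f, |(K ^ (n+1)) f| ≤ (C * ‖f‖ * l ^ n) • g := by
    intro n
    induction n with
    | zero => intro f; simpa using hb f
    | succ n ih =>
      intro f
      have h := ih f
      have e : (K ^ (n+1+1)) f = K ((K ^ (n+1)) f) := by rw [pow_succ']; rfl
      rw [e]
      have c0 : 0 ≤ C * ‖f‖ * l ^ n := by positivity
      rw [abs_le'] at h ⊢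
      have e2 : (C * ‖f‖ * l ^ n) • K g ≤ (C * ‖f‖ * l ^ (n+1)) • g := by
        calc _ ≤ (C * ‖f‖ * l ^ n) • (l • g) := hs _ _ _ c0 hg1
          _ = _ := by rw [smul_smul, pow_succ]; ring_nf
      constructor
      · have := hK _ _ h.1
        rw [map_smul] at this
        exact this.trans e2
      · have := hK _ _ h.2
        rw [map_smul, map_neg] at this
        exact this.trans e2
  set D : ℝ := C * ‖g‖ / l + 1 with hD
  have hD0 : 0 < D := by positivity
  have hn : ∀ n : ℕ, ‖K ^ (n+1)‖ ≤ D * l ^ (n+1) := by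
    intro n
    refine ContinuousLinearMap.opNorm_le_bound _ (by positivity) ?_
    intro f
    have h1 : ‖(K ^ (n+1)) f‖ ≤ ‖(C * ‖f‖ * l ^ n) • g‖ :=
      norm_le_norm_of_abs_le_abs ((key n f).trans (le_abs_self _))
    refine h1.trans ?_
    rw [norm_smul, Real.norm_of_nonneg (by positivity)]
    have : D * l ^ (n+1) * ‖f‖ = C * ‖f‖ * l ^ n * ‖g‖ + l^(n+1) * ‖f‖ := by
      rw [hD]; field_simp; ring
    rw [this]
    have : 0 ≤ l^(n+1) * ‖f‖ := by positivity
    linarith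
  have hle : ∀ n : ℕ, specRad K ≤ D ^ (1 / ((n:ℝ) + 1)) * l := by
    intro n
    have hbdd : BddBelow (Set.range fun n : ℕ => ‖K ^ (n + 1)‖ ^ (1 / (n + 1) : ℝ)) :=
      ⟨0, by rintro _ ⟨m, rfl⟩; positivity⟩
    refine (ciInf_le hbdd n).trans ?_
    calc ‖K ^ (n + 1)‖ ^ (1 / (n + 1) : ℝ) ≤ (D * l ^ (n+1)) ^ (1 / (n + 1) : ℝ) :=
          Real.rpow_le_rpow (norm_nonneg _) (hn n) (by positivity)
      _ = _ := by
        rw [Real.mul_rpow hD0.le (by positivity)]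
        congr 1
        rw [one_div]
        have := Real.pow_rpow_inv_natCast hl.le (Nat.succ_ne_zero n)
        simpa using this
  have ht : Tendsto (fun n : ℕ => D ^ (1 / ((n:ℝ) + 1)) * l) atTop (𝓝 (D ^ (0:ℝ) * l)) := by
    refine Tendsto.mul_const l ?_
    exact ((Real.continuous_const_rpow hD0.ne').tendsto 0).comp tendsto_one_div_add_atTop_nhds_zero_nat
  rw [Real.rpow_zero, one_mul] at ht
  exact ge_of_tendsto' ht hle

theorem le_specRad_aux {E : Type*} [NormedAddCommGroup E] [NormedSpace ℝ E] [Lattice E]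
    [HasSolidNorm E] [IsOrderedAddMonoid E]
    (hs : ∀ (c : ℝ) (a b : E), 0 ≤ c → a ≤ b → c • a ≤ c • b)
    (K : E →L[ℝ] E) (hK : ∀ a b, a ≤ b → K a ≤ K b) (g : E) (hg : 0 ≤ g) (hg0 : g ≠ 0)
    (l : ℝ) (hl : 0 < l) (hg1 : l • g ≤ K g) : l ≤ specRad K := by
  have key : ∀ n : ℕ, (l ^ n) • g ≤ (K ^ n) g := by
    intro n
    induction n with
    | zero => simp
    | succ n ih =>
      have e : (K ^ (n+1)) g = K ((K ^ n) g) := by rw [pow_succ']; rfl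
      rw [e]
      have := hK _ _ ih
      rw [map_smul] at this
      refine le_trans ?_ this
      calc (l ^ (n+1)) • g = (l ^ n) • (l • g) := by rw [smul_smul, pow_succ]
        _ ≤ _ := hs _ _ _ (by positivity) hg1
  have hgn : 0 < ‖g‖ := norm_pos_iff.2 hg0
  refine le_ciInf fun n => ?_
  have h0 : 0 ≤ (l ^ (n+1)) • g := by
    simpa using hs (l ^ (n+1)) 0 g (by positivity) hg
  have h1 : ‖(l ^ (n+1)) • g‖ ≤ ‖(K ^ (n+1)) g‖ := by
    refine norm_le_norm_of_abs_le_abs ?_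
    rw [abs_of_nonneg h0]
    exact (key (n+1)).trans (le_abs_self _)
  rw [norm_smul, Real.norm_of_nonneg (by positivity)] at h1
  have h2 : l ^ (n+1) ≤ ‖K ^ (n+1)‖ :=
    le_of_mul_le_mul_right (h1.trans (ContinuousLinearMap.le_opNorm _ _)) hgn
  calc l = (l ^ (n+1)) ^ (1 / ((n:ℝ) + 1)) := by
        have := Real.pow_rpow_inv_natCast hl.le (Nat.succ_ne_zero n)
        rw [one_div]; simpa using this.symm
    _ ≤ _ := Real.rpow_le_rpow (by positivity) h2 (by positivity)

/-- **Necessity.**  In the compact-state-space setting, if the Epstein–Zin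
operator `(A g)(x) = (ξ(x) + β (K g(x))^(1/θ))^θ` has a nonzero fixed point in
the cone `L_p(X,π)_+` of a.e. strictly positive functions, then
`β ρ(K)^(1/θ) < 1`. -/
theorem necessity_of_spectral_condition
    {X : Type*} [MetricSpace X] [CompactSpace X] [MeasurableSpace X] [BorelSpace X]
    (μ π : Measure X) [IsFiniteMeasure μ] [μ.IsOpenPosMeasure] [IsProbabilityMeasure π]
    (d : X → ℝ) (hd_cont : Continuous d) (hd_pos : ∀ x, 0 < d x)
    (hπ : π = μ.withDensity (fun x => ENNReal.ofReal (d x)))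
    (p : ℝ≥0∞) [Fact (1 ≤ p)] (hp_top : p ≠ ⊤)
    (k : X → X → ℝ) (hk_cont : Continuous (Function.uncurry k))
    (hk_pos : ∀ x y, 0 < k x y)
    (K : Lp ℝ p π →L[ℝ] Lp ℝ p π)
    (hK : ∀ g : Lp ℝ p π, (K g : X → ℝ) =ᵐ[π] fun x => ∫ y, k x y * g y ∂μ)
    (β θ : ℝ) (hβ0 : 0 < β) (hβ1 : β < 1) (hθ : θ ≠ 0)
    (ξ : X → ℝ) (hξ_cont : Continuous ξ) (hξ_pos : ∀ x, 0 < ξ x)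
    (A : Lp ℝ p π → Lp ℝ p π)
    (hA : ∀ g : Lp ℝ p π, (∀ᵐ x ∂π, 0 < g x) →
      (A g : X → ℝ) =ᵐ[π] fun x => (ξ x + β * ((K g : X → ℝ) x) ^ (1 / θ)) ^ θ)
    (hfix : ∃ g : Lp ℝ p π, g ≠ 0 ∧ (∀ᵐ x ∂π, 0 < g x) ∧ A g = g) :
    β * specRad K ^ (1 / θ) < 1 := by
  obtain ⟨g, hg0, hgpos, hAg⟩ := hfix
  have hne : Nonempty X := by
    by_contra h
    rw [not_nonempty_iff] at h
    have := measure_univ (μ := π)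
    simp [Set.univ_eq_empty_iff.2 h] at this
  have hdm : AEMeasurable (fun x => ENNReal.ofReal (d x)) μ :=
    (ENNReal.continuous_ofReal.comp hd_cont).measurable.aemeasurable
  have hac : μ ≪ π := by
    rw [hπ]
    exact withDensity_absolutelyContinuous' hdm (ae_of_all _ fun x => by simpa using hd_pos x)
  -- lower bound for the density
  obtain ⟨x0, -, hx0⟩ := isCompact_univ.exists_isMinOn Set.univ_nonempty hd_cont.continuousOn
  replace hx0 := fun x => hx0 (Set.mem_univ x)
  -- integrability with respect to μ
  have hint : ∀ f : Lp ℝ p π, Integrable f μ := by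
    intro f
    have h1 : Integrable f π := (Lp.memLp f).integrable (Fact.out)
    have hm : AEStronglyMeasurable f μ := (Lp.aestronglyMeasurable f).mono_ac hac
    have h2 : Integrable (fun x => f x * d x) μ := by
      have h1' : Integrable (f : X → ℝ) (μ.withDensity fun x => ENNReal.ofReal (d x)) :=
        h1.mono_measure hπ.ge
      have := (integrable_withDensity_iff_integrable_smul' (μ := μ)
        (ENNReal.continuous_ofReal.comp hd_cont).measurable (ae_of_all _ fun x => by simp)).1 h1'
      refine this.congr (ae_of_all _ fun x => ?_)
      simp [ENNReal.toReal_ofReal (hd_pos x).le, mul_comm]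
    refine (h2.norm.const_mul (d x0)⁻¹).mono' hm (ae_of_all _ fun x => ?_)
    rw [norm_mul, Real.norm_of_nonneg (hd_pos x).le]
    rw [inv_mul_eq_div, le_div_iff₀ (hd_pos x0)]
    exact mul_le_mul_of_nonneg_left (hx0 x) (norm_nonneg _)
  -- kernel bounds
  obtain ⟨z0, -, hz0⟩ := isCompact_univ.exists_isMinOn Set.univ_nonempty hk_cont.continuousOn
  replace hz0 := fun x => hz0 (Set.mem_univ x)
  obtain ⟨z1, -, hz1⟩ := isCompact_univ.exists_isMaxOn Set.univ_nonempty hk_cont.continuousOn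
  replace hz1 := fun x => hz1 (Set.mem_univ x)
  obtain ⟨a, ha, hka⟩ : ∃ a : ℝ, 0 < a ∧ ∀ x y, a ≤ k x y :=
    ⟨_, hk_pos z0.1 z0.2, fun x y => hz0 (x, y)⟩
  obtain ⟨b, hb, hkb⟩ : ∃ b : ℝ, 0 < b ∧ ∀ x y, k x y ≤ b :=
    ⟨_, hk_pos z1.1 z1.2, fun x y => hz1 (x, y)⟩
  have hkint : ∀ (f : Lp ℝ p π) x, Integrable (fun y => k x y * f y) μ := by
    intro f x
    have hkx : Continuous (k x) := hk_cont.comp (Continuous.prodMk_right x)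
    refine (hint f).bdd_mul (c := b) hkx.aestronglyMeasurable (ae_of_all _ fun y => ?_)
    rw [Real.norm_of_nonneg (hk_pos x y).le]; exact hkb x y
  have hlow : ∀ f : Lp ℝ p π, 0 ≤ f → ∀ᵐ x ∂π, a * ∫ y, f y ∂μ ≤ K f x := by
    intro f hf
    have hf' : ∀ᵐ y ∂μ, 0 ≤ f y := hac.ae_le ((Lp.coeFn_nonneg f).2 hf)
    filter_upwards [hK f] with x hx
    rw [hx, ← integral_const_mul]
    refine integral_mono_ae ((hint f).const_mul a) (hkint f x) ?_
    filter_upwards [hf'] with y hy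
    exact mul_le_mul_of_nonneg_right (hka x y) hy
  have hupp : ∀ f : Lp ℝ p π, 0 ≤ f → ∀ᵐ x ∂π, K f x ≤ b * ∫ y, f y ∂μ := by
    intro f hf
    have hf' : ∀ᵐ y ∂μ, 0 ≤ f y := hac.ae_le ((Lp.coeFn_nonneg f).2 hf)
    filter_upwards [hK f] with x hx
    rw [hx, ← integral_const_mul]
    refine integral_mono_ae (hkint f x) ((hint f).const_mul b) ?_
    filter_upwards [hf'] with y hy
    exact mul_le_mul_of_nonneg_right (hkb x y) hy
  have hmono : ∀ u v : Lp ℝ p π, u ≤ v → K u ≤ K v := by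
    intro u v huv
    rw [← Lp.coeFn_le] at huv ⊢
    have h' : ∀ᵐ y ∂μ, u y ≤ v y := hac.ae_le huv
    filter_upwards [hK u, hK v] with x hx hx'
    rw [hx, hx']
    refine integral_mono_ae (hkint u x) (hkint v x) ?_
    filter_upwards [h'] with y hy
    exact mul_le_mul_of_nonneg_left hy (hk_pos x y).le
  have hInn : ∀ f : Lp ℝ p π, 0 ≤ f → 0 ≤ ∫ y, f y ∂μ := by
    intro f hf
    exact integral_nonneg_of_ae (hac.ae_le ((Lp.coeFn_nonneg f).2 hf))
  have hInorm : ∀ f : Lp ℝ p π, 0 ≤ f → a * ∫ y, f y ∂μ ≤ ‖K‖ * ‖f‖ := by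
    intro f hf
    have h0 : 0 ≤ a * ∫ y, f y ∂μ := mul_nonneg ha.le (hInn f hf)
    refine le_trans ?_ (K.le_opNorm f)
    have h1 : ‖Lp.const p π (a * ∫ y, f y ∂μ)‖ ≤ ‖K f‖ := by
      refine Lp.norm_le_norm_of_ae_le ?_
      filter_upwards [hlow f hf, Lp.coeFn_const (p := p) (μ := π) (a * ∫ y, f y ∂μ)] with x hx hc
      rw [hc, Function.const_apply, Real.norm_of_nonneg h0]
      exact hx.trans (le_abs_self _)
    have hp0 : p ≠ 0 := (lt_of_lt_of_le one_pos (Fact.out : 1 ≤ p)).ne'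
    rw [Lp.norm_const' p π _ hp0 hp_top] at h1
    simpa [Real.norm_of_nonneg h0, abs_of_nonneg ha.le, abs_of_nonneg (hInn f hf)] using h1
  have hgnn : 0 ≤ g := (Lp.coeFn_nonneg g).1 (hgpos.mono fun x hx => hx.le)
  set I := ∫ y, g y ∂μ with hI
  have hIpos : 0 < I := by
    have hgp : ∀ᵐ y ∂μ, 0 < g y := hac.ae_le hgpos
    refine (integral_pos_iff_support_of_nonneg_ae (hgp.mono fun x hx => hx.le) (hint g)).2 ?_
    have : Function.support g =ᵐ[μ] Set.univ := by
      rw [eventuallyEq_univ]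
      filter_upwards [hgp] with y hy using hy.ne'
    rw [measure_congr this]
    exact Measure.measure_univ_pos.2 (fun h => by simpa [h] using isOpen_univ.measure_pos μ Set.univ_nonempty)
  -- bounds for ξ and for (K g)^(1/θ)
  obtain ⟨s0, -, hs0⟩ := isCompact_univ.exists_isMinOn Set.univ_nonempty hξ_cont.continuousOn
  replace hs0 := fun x => hs0 (Set.mem_univ x)
  obtain ⟨s1, -, hs1⟩ := isCompact_univ.exists_isMaxOn Set.univ_nonempty hξ_cont.continuousOn
  replace hs1 := fun x => hs1 (Set.mem_univ x)
  have hbds : ∀ᵐ x ∂π, a * I ≤ K g x ∧ K g x ≤ b * I := (hlow g hgnn).and (hupp g hgnn)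
  have haI : 0 < a * I := mul_pos ha hIpos
  have hbI : 0 < b * I := mul_pos hb hIpos
  have hfixae : ∀ᵐ x ∂π, g x = (ξ x + β * (K g x) ^ (1 / θ)) ^ θ := by
    have := hA g hgpos
    rw [hAg] at this
    exact this
  set M := max ((a * I) ^ (1/θ)) ((b * I) ^ (1/θ)) with hM
  have hMpos : 0 < M := lt_max_of_lt_left (Real.rpow_pos_of_pos haI _)
  have hKM : ∀ t, a * I ≤ t → t ≤ b * I → t ^ (1/θ) ≤ M := by
    intro t h1 h2
    rcases le_or_gt 0 (1/θ) with h | h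
    · exact (Real.rpow_le_rpow (haI.le.trans h1) h2 h).trans (le_max_right _ _)
    · exact (Real.rpow_le_rpow_of_nonpos haI h1 h.le).trans (le_max_left _ _)
  set c := ξ s0 with hc
  have hcpos : 0 < c := hξ_pos s0
  set ε := c / (β * M) with hε
  have hεpos : 0 < ε := by positivity
  set r := (1 + ε) * β with hr
  have hrpos : 0 < r := by positivity
  set l := r ^ (-θ) with hl
  have hlpos : 0 < l := Real.rpow_pos_of_pos hrpos _
  have hlr : l ^ (1/θ) = r⁻¹ := by
    rw [hl, ← Real.rpow_mul hrpos.le, ← Real.rpow_neg_one]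
    congr 1; field_simp
  have hfin : β * l ^ (1/θ) < 1 := by
    rw [hlr, hr, ← div_eq_mul_inv, div_lt_one hrpos]
    nlinarith
  have hkey : ∀ᵐ x ∂π, r * (K g x) ^ (1/θ) ≤ ξ x + β * (K g x) ^ (1/θ) := by
    filter_upwards [hbds] with x hx
    have h1 := hKM _ hx.1 hx.2
    have h2 : ε * β * (K g x) ^ (1/θ) ≤ ε * β * M := by gcongr
    have h3 : ε * β * M = c := by rw [hε]; field_simp
    have h4 : c ≤ ξ x := hs0 x
    rw [hr]; linarith
  have hrK : ∀ t : ℝ, 0 < t → (r * t ^ (1/θ)) ^ θ = l⁻¹ * t := by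
    intro t ht
    rw [Real.mul_rpow hrpos.le (by positivity), ← Real.rpow_mul ht.le, one_div_mul_cancel hθ,
      Real.rpow_one, hl, Real.rpow_neg hrpos.le, inv_inv]
  have hs : ∀ (c : ℝ) (u v : Lp ℝ p π), 0 ≤ c → u ≤ v → c • u ≤ c • v := by
    intro c u v hc0 huv
    rw [← Lp.coeFn_le] at huv ⊢
    filter_upwards [huv, Lp.coeFn_smul c u, Lp.coeFn_smul c v] with x h1 h2 h3
    rw [h2, h3]
    exact mul_le_mul_of_nonneg_left h1 hc0
  rcases lt_or_gt_of_ne hθ with hneg | hpos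
  · have h1 : l • g ≤ K g := by
      rw [← Lp.coeFn_le]
      filter_upwards [hbds, hkey, hfixae, Lp.coeFn_smul l g] with x h1 h2 h3 h4
      have hKx : 0 < K g x := haI.trans_le h1.1
      have h5 := Real.rpow_le_rpow_of_nonpos (by positivity) h2 hneg.le
      rw [hrK _ hKx, ← h3] at h5
      rw [h4, Pi.smul_apply, smul_eq_mul]
      rwa [inv_mul_eq_div, le_div_iff₀ hlpos, mul_comm] at h5
    have h2 := le_specRad_aux hs K hmono g hgnn hg0 l hlpos h1
    have h3 := Real.rpow_le_rpow_of_nonpos hlpos h2 (one_div_neg.2 hneg).le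
    exact lt_of_le_of_lt (mul_le_mul_of_nonneg_left h3 hβ0.le) hfin
  · have h1 : K g ≤ l • g := by
      rw [← Lp.coeFn_le]
      filter_upwards [hbds, hkey, hfixae, Lp.coeFn_smul l g] with x h1 h2 h3 h4
      have hKx : 0 < K g x := haI.trans_le h1.1
      have h5 := Real.rpow_le_rpow (by positivity) h2 hpos.le
      rw [hrK _ hKx, ← h3] at h5
      rw [h4, Pi.smul_apply, smul_eq_mul]
      rwa [inv_mul_eq_div, div_le_iff₀ hlpos, mul_comm] at h5
    have hglow : ∀ᵐ x ∂π, c ^ θ ≤ g x := by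
      filter_upwards [hbds, hfixae] with x h1 h3
      have hKx : 0 < K g x := haI.trans_le h1.1
      rw [h3]
      refine Real.rpow_le_rpow hcpos.le ?_ hpos.le
      have : 0 ≤ β * (K g x) ^ (1/θ) := by positivity
      have h4 : c ≤ ξ x := hs0 x
      linarith
    have hcθ : 0 < c ^ θ := Real.rpow_pos_of_pos hcpos _
    have h2 : specRad K ≤ l := by
      refine specRad_le_aux hs K hmono g l (b * (‖K‖ + 1) / a / c ^ θ) hlpos (by positivity) h1 ?_
      intro f
      have e1 : |K f| ≤ K |f| := by
        rw [abs_le']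
        refine ⟨hmono _ _ (le_abs_self _), ?_⟩
        rw [← map_neg]
        exact hmono _ _ (neg_le_abs _)
      refine e1.trans ?_
      rw [← Lp.coeFn_le]
      have hJ := hInorm |f| (abs_nonneg f)
      rw [norm_abs_eq_norm] at hJ
      filter_upwards [hupp |f| (abs_nonneg f), hglow,
        Lp.coeFn_smul (b * (‖K‖ + 1) / a / c ^ θ * ‖f‖) g] with x hx1 hx2 hx3
      rw [hx3, Pi.smul_apply, smul_eq_mul]
      refine hx1.trans ?_
      have hJ2 : ∫ y, |f| y ∂μ ≤ (‖K‖ + 1) * ‖f‖ / a := by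
        rw [le_div_iff₀ ha]
        nlinarith [norm_nonneg f]
      calc b * ∫ y, |f| y ∂μ ≤ b * ((‖K‖ + 1) * ‖f‖ / a) := by gcongr
        _ = b * (‖K‖ + 1) / a / c ^ θ * ‖f‖ * c ^ θ := by field_simp
        _ ≤ _ := by gcongr
    have h0 : 0 ≤ specRad K := Real.iInf_nonneg fun n => by positivity
    have h3 := Real.rpow_le_rpow h0 h2 (one_div_pos.2 hpos).le
    exact lt_of_le_of_lt (mul_le_mul_of_nonneg_left h3 hβ0.le) hfin
end
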